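/- arXiv:2204.03519 — 3 statements merged into one kernel-verified Lean document; each statement's English description precedes it below -/
import Mathlib

section
/- There exist a constant K > 0 and a natural number k₀ such that for every integer k ≥ k₀ and every real σ with 9/5 ≤ σ ≤ 2, the series ∑_{m=1}^∞ τ_k(m²) / m^σ converges and satisfies ∑_{m=1}^∞ τ_k(m²) / m^σ ≤ K · k^{10 · k^{2/σ}}. -/
open Finset

/-- The `k`-fold divisor function `τ_k(n)`: the number of `k`-tuples
`(a_1, …, a_k)` of positive integers with `a_1 ⋯ a_k = n`. -/
def tauk (k n : ℕ) : ℕ :=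
  ((Fintype.piFinset fun _ : Fin k => Finset.Icc 1 n).filter fun f => ∏ i, f i = n).card

/-!
Since `τ_k(p ^ n) = multichoose k n`, the Euler factor at `p` is the even part of `(1 - x)⁻ᵏ` at
`x = p ^ (-σ / 2)`. Put `u = k x`. The factor is at most `exp (2 u)`, because
`(1 - x)⁻¹ ≤ exp (2 x)`, and, when `u` is small, at most `(1 - u²)⁻¹ ≤ exp (2 u²)`, because
`multichoose k n ≤ k ^ n`. Hence it is at most `exp (3 u ^ a)` for every `1 ≤ a ≤ 2`, whatever the
size of `u`. Multiplying over the primes and using `∑_{n ≥ 2} n ^ (-b) ≤ 1 / (b - 1)` with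
`b = a σ / 2` bounds the Dirichlet series by `exp (6 k ^ a / (a σ - 2))`. As in Rankin's trick, the
exponent is then optimized: the best choice `a = 2 / σ + 1 / log k` gives
`k ^ (6 e / σ * k ^ (2 / σ))`.
-/

section DivisorFunction

theorem tauk_eq_card_finMulAntidiag (k n : ℕ) : tauk k n = #(Nat.finMulAntidiag k n) := by
  rcases eq_or_ne n 0 with rfl | hn
  · rw [Nat.finMulAntidiag_zero_right, tauk, filter_eq_empty_iff.2]
    intro f hf hprod
    obtain ⟨i, -, hi⟩ := prod_eq_zero_iff.1 hprod
    simpa [hi] using Fintype.mem_piFinset.1 hf i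
  · rw [tauk]
    congr 1
    ext f
    simp only [mem_filter, Fintype.mem_piFinset, mem_Icc, Nat.mem_finMulAntidiag]
    refine ⟨fun h ↦ ⟨h.2, hn⟩, fun h ↦ ⟨fun i ↦ ?_, h.1⟩⟩
    have hdvd : f i ∣ n := h.1 ▸ dvd_prod_of_mem f (mem_univ i)
    exact ⟨Nat.pos_of_dvd_of_pos hdvd hn.bot_lt, Nat.le_of_dvd hn.bot_lt hdvd⟩

theorem tauk_succ (k n : ℕ) : tauk (k + 1) n = ∑ d ∈ n.divisors, tauk k d := by
  simp only [tauk_eq_card_finMulAntidiag]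
  rw [← card_sigma]
  refine card_nbij' (fun f ↦ ⟨∏ i, Fin.tail f i, Fin.tail f⟩) (fun x ↦ Fin.cons (n / x.1) x.2)
    ?_ ?_ ?_ ?_
  · intro f hf
    rw [mem_coe, Nat.mem_finMulAntidiag, Fin.prod_univ_succ] at hf
    have hdvd : ∏ i, Fin.tail f i ∣ n := ⟨f 0, by rw [mul_comm]; exact hf.1.symm⟩
    simp only [coe_sigma, Set.mem_sigma_iff, mem_coe, Nat.mem_divisors, Nat.mem_finMulAntidiag]
    exact ⟨⟨hdvd, hf.2⟩, trivial, ne_zero_of_dvd_ne_zero hf.2 hdvd⟩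
  · rintro ⟨d, g⟩ hx
    simp only [coe_sigma, Set.mem_sigma_iff, mem_coe, Nat.mem_divisors,
      Nat.mem_finMulAntidiag] at hx
    obtain ⟨⟨hdvd, hn⟩, hprod, -⟩ := hx
    simp only [mem_coe, Nat.mem_finMulAntidiag, Fin.prod_univ_succ, Fin.cons_zero, Fin.cons_succ,
      hprod]
    exact ⟨Nat.div_mul_cancel hdvd, hn⟩
  · intro f hf
    rw [mem_coe, Nat.mem_finMulAntidiag, Fin.prod_univ_succ] at hf
    obtain ⟨hprod, hn⟩ := hf
    have htail : ∏ i, Fin.tail f i ≠ 0 := right_ne_zero_of_mul (hprod.trans_ne hn)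
    have hhead : n / ∏ i, Fin.tail f i = f 0 :=
      Nat.div_eq_of_eq_mul_left htail.bot_lt hprod.symm
    simp only [hhead, Fin.cons_self_tail]
  · rintro ⟨d, g⟩ hx
    simp only [coe_sigma, Set.mem_sigma_iff, mem_coe, Nat.mem_finMulAntidiag] at hx
    obtain ⟨-, rfl, -⟩ := hx
    simp only [Fin.tail_cons]

theorem tauk_eq_zeta_pow_apply (k n : ℕ) : tauk k n = (ArithmeticFunction.zeta ^ k) n := by
  induction k generalizing n with
  | zero =>
    rw [tauk_eq_card_finMulAntidiag, pow_zero, ArithmeticFunction.one_apply]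
    split_ifs with h
    · rw [h, Nat.finMulAntidiag_one, card_singleton]
    · rw [Nat.finMulAntidiag_zero_left h, card_empty]
  | succ k ih =>
    rw [tauk_succ, pow_succ, ArithmeticFunction.mul_zeta_apply]
    exact sum_congr rfl fun d _ ↦ ih d

theorem tauk_zero_right (k : ℕ) : tauk k 0 = 0 := by
  rw [tauk_eq_zeta_pow_apply, ArithmeticFunction.map_zero]

theorem tauk_one_right (k : ℕ) : tauk k 1 = 1 := by
  rw [tauk_eq_zeta_pow_apply]
  exact ArithmeticFunction.isMultiplicative_zeta.pow.map_one

theorem tauk_mul_of_coprime (k : ℕ) {m n : ℕ} (h : m.Coprime n) :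
    tauk k (m * n) = tauk k m * tauk k n := by
  simp only [tauk_eq_zeta_pow_apply]
  exact ArithmeticFunction.isMultiplicative_zeta.pow.map_mul_of_coprime h

theorem tauk_prime_pow (k n : ℕ) {p : ℕ} (hp : p.Prime) :
    tauk k (p ^ n) = k.multichoose n := by
  induction k generalizing n with
  | zero =>
    rw [tauk_eq_zeta_pow_apply, pow_zero, ArithmeticFunction.one_apply]
    cases n with
    | zero => simp
    | succ n => simp [hp.ne_one]
  | succ k ih =>
    rw [tauk_succ, Nat.sum_divisors_prime_pow hp, sum_congr rfl fun i _ ↦ ih i,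
      Nat.sum_range_multichoose, Nat.multichoose_eq, add_right_comm, Nat.add_sub_cancel,
      add_comm n k, Nat.choose_symm_add]

end DivisorFunction

section Multichoose

theorem multichoose_le_pow (k n : ℕ) : k.multichoose n ≤ k ^ n := by
  induction n generalizing k with
  | zero => simp
  | succ n ihn =>
    induction k with
    | zero => simp
    | succ k ihk =>
      calc (k + 1).multichoose (n + 1) = k.multichoose (n + 1) + (k + 1).multichoose n :=
            Nat.multichoose_succ_succ k n
        _ ≤ k ^ (n + 1) + (k + 1) ^ n := add_le_add ihk (ihn (k + 1))
        _ ≤ k * (k + 1) ^ n + (k + 1) ^ n := by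
            rw [pow_succ']
            gcongr
            exact k.le_succ
        _ = (k + 1) ^ (n + 1) := by ring

variable {𝕜 : Type*} [NormedDivisionRing 𝕜] {x : 𝕜}

theorem hasSum_multichoose_mul_pow (k : ℕ) (hx : ‖x‖ < 1) :
    HasSum (fun n ↦ (k.multichoose n : 𝕜) * x ^ n) ((1 - x)⁻¹ ^ k) := by
  cases k with
  | zero =>
    have hzero : ∀ n ≠ 0, (Nat.multichoose 0 n : 𝕜) * x ^ n = 0 := by
      intro n hn
      obtain ⟨m, rfl⟩ := Nat.exists_eq_succ_of_ne_zero hn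
      rw [Nat.multichoose_zero_succ, Nat.cast_zero, zero_mul]
    simpa using hasSum_single 0 hzero
  | succ j =>
    convert! hasSum_choose_mul_geometric_of_norm_lt_one j hx using 1
    · ext n
      rw [Nat.multichoose_eq, add_right_comm, Nat.add_sub_cancel, add_comm j n,
        Nat.choose_symm_add]
    · rw [inv_pow, one_div]

theorem summable_multichoose_two_mul_mul_pow [CompleteSpace 𝕜] (k : ℕ) (hx : ‖x‖ < 1) :
    Summable fun n ↦ (k.multichoose (2 * n) : 𝕜) * x ^ (2 * n) :=
  (hasSum_multichoose_mul_pow k hx).summable.comp_injective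
    (mul_right_injective₀ (two_ne_zero' ℕ))

end Multichoose

section LocalFactor

variable {x : ℝ}

theorem inv_one_sub_le_exp_two_mul (hx : 0 ≤ x) (hx2 : x ^ 2 ≤ 1 / 2) :
    (1 - x)⁻¹ ≤ Real.exp (2 * x) := by
  have hx1 : 0 < 1 - x := by nlinarith
  rw [inv_le_iff_one_le_mul₀ hx1]
  calc (1 : ℝ) ≤ (1 + 2 * x + (2 * x) ^ 2 / 2) * (1 - x) := by nlinarith
    _ ≤ Real.exp (2 * x) * (1 - x) := by
      gcongr
      exact Real.quadratic_le_exp_of_nonneg (by positivity)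

theorem tsum_multichoose_two_mul_mul_pow_le_exp (k : ℕ) (hx : 0 ≤ x) (hx2 : x ^ 2 ≤ 1 / 2) :
    ∑' n, (k.multichoose (2 * n) : ℝ) * x ^ (2 * n) ≤ Real.exp (2 * (k * x)) := by
  have hnorm : ‖x‖ < 1 := by rw [Real.norm_of_nonneg hx]; nlinarith
  have hsum := hasSum_multichoose_mul_pow k hnorm
  have hx1 : 0 < 1 - x := by nlinarith
  calc ∑' n, (k.multichoose (2 * n) : ℝ) * x ^ (2 * n)
      ≤ ∑' n, (k.multichoose n : ℝ) * x ^ n :=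
        tsum_comp_le_tsum_of_inj hsum.summable (fun n ↦ by positivity)
          (mul_right_injective₀ (two_ne_zero' ℕ))
    _ = (1 - x)⁻¹ ^ k := hsum.tsum_eq
    _ ≤ Real.exp (2 * x) ^ k := by gcongr; exact inv_one_sub_le_exp_two_mul hx hx2
    _ = Real.exp (2 * (k * x)) := by rw [← Real.exp_nat_mul, mul_left_comm]

theorem tsum_multichoose_two_mul_mul_pow_le_exp_sq {k : ℕ} (hx : ‖x‖ < 1)
    (hkx : (k * x) ^ 4 ≤ 1 / 2) :
    ∑' n, (k.multichoose (2 * n) : ℝ) * x ^ (2 * n) ≤ Real.exp (2 * (k * x) ^ 2) := by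
  have hkx1 : (k * x) ^ 2 < 1 := by nlinarith
  have hgeom := hasSum_geometric_of_lt_one (sq_nonneg (k * x)) hkx1
  calc ∑' n, (k.multichoose (2 * n) : ℝ) * x ^ (2 * n) ≤ ∑' n, ((k * x) ^ 2) ^ n := by
        refine (summable_multichoose_two_mul_mul_pow k hx).tsum_le_tsum (fun n ↦ ?_) hgeom.summable
        rw [← pow_mul, mul_pow]
        gcongr
        · exact (even_two_mul n).pow_nonneg x
        · exact_mod_cast multichoose_le_pow k (2 * n)
    _ = (1 - (k * x) ^ 2)⁻¹ := hgeom.tsum_eq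
    _ ≤ Real.exp (2 * (k * x) ^ 2) :=
        inv_one_sub_le_exp_two_mul (sq_nonneg _) (by rw [← pow_mul]; exact hkx)

theorem tsum_multichoose_two_mul_mul_pow_le_exp_rpow (k : ℕ) {a : ℝ} (ha1 : 1 ≤ a) (ha2 : a ≤ 2)
    (hx : 0 ≤ x) (hx2 : x ^ 2 ≤ 1 / 2) :
    ∑' n, (k.multichoose (2 * n) : ℝ) * x ^ (2 * n) ≤ Real.exp (3 * (k * x) ^ a) := by
  set u : ℝ := k * x
  have hu : 0 ≤ u := by positivity
  have hlin := tsum_multichoose_two_mul_mul_pow_le_exp k hx hx2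
  rcases le_total 1 u with hu1 | hu1
  · refine hlin.trans (Real.exp_le_exp.2 ?_)
    linarith [Real.self_le_rpow_of_one_le hu1 ha1]
  have hsq : u ^ 2 ≤ u ^ a := by
    rw [← Real.rpow_two]
    exact Real.rpow_le_rpow_of_exponent_ge_of_imp hu hu1 ha2 (by intros; linarith)
  rcases le_total (2 / 3) u with hu2 | hu2
  · refine hlin.trans (Real.exp_le_exp.2 ?_)
    nlinarith
  · have hx1 : ‖x‖ < 1 := by rw [Real.norm_of_nonneg hx]; nlinarith
    have hu4 : u ^ 4 ≤ 1 / 2 := by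
      calc u ^ 4 ≤ (2 / 3) ^ 4 := by gcongr
        _ ≤ 1 / 2 := by norm_num
    refine (tsum_multichoose_two_mul_mul_pow_le_exp_sq hx1 hu4).trans (Real.exp_le_exp.2 ?_)
    nlinarith

end LocalFactor

section EulerProduct

theorem summable_and_tsum_le_exp_of_prime_pow {f g : ℕ → ℝ} {B : ℝ} (hf : ∀ n, 0 ≤ f n)
    (hf0 : f 0 = 0) (hf1 : f 1 = 1) (hmul : ∀ {m n : ℕ}, m.Coprime n → f (m * n) = f m * f n)
    (hsum : ∀ {p : ℕ}, p.Prime → Summable fun n ↦ f (p ^ n))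
    (hle : ∀ {p : ℕ}, p.Prime → ∑' n, f (p ^ n) ≤ Real.exp (g p))
    (hB : ∀ N : ℕ, ∑ p ∈ N.primesBelow, g p ≤ B) :
    Summable f ∧ ∑' n, f n ≤ Real.exp B := by
  have hpartial : ∀ N, ∑ n ∈ range N, f n ≤ Real.exp B := by
    intro N
    have hsmooth := (EulerProduct.summable_and_hasSum_smoothNumbers_prod_primesBelow_tsum hf1 hmul
      (fun hp ↦ (hsum hp).norm) N).2
    replace hsmooth := hasSum_subtype_iff_indicator.1 hsmooth
    calc ∑ n ∈ range N, f n = ∑ n ∈ range N, (N.smoothNumbers).indicator f n := by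
          refine sum_congr rfl fun n hn ↦ ?_
          rcases n.eq_zero_or_pos with rfl | hpos
          · rw [Set.indicator_apply_eq_self.2 fun _ ↦ hf0]
          · rw [Set.indicator_of_mem (Nat.mem_smoothNumbers_of_lt hpos (mem_range.1 hn))]
      _ ≤ ∏ p ∈ N.primesBelow, ∑' n, f (p ^ n) :=
          sum_le_hasSum _ (fun n _ ↦ Set.indicator_nonneg (fun _ _ ↦ hf _) n) hsmooth
      _ ≤ ∏ p ∈ N.primesBelow, Real.exp (g p) :=
          prod_le_prod (fun p _ ↦ tsum_nonneg fun n ↦ hf _)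
            fun p hp ↦ hle (Nat.prime_of_mem_primesBelow hp)
      _ = Real.exp (∑ p ∈ N.primesBelow, g p) := (Real.exp_sum _ _).symm
      _ ≤ Real.exp B := Real.exp_le_exp.2 (hB N)
  exact ⟨summable_of_sum_range_le hf hpartial, Real.tsum_le_of_sum_range_le hf hpartial⟩

theorem sum_Icc_two_rpow_neg_le {b : ℝ} (hb : 1 < b) (N : ℕ) :
    ∑ n ∈ Icc 2 N, (n : ℝ) ^ (-b) ≤ 1 / (b - 1) := by
  have hpos : ∀ t : ℝ, ((1 : ℕ) : ℝ) ≤ t → 0 < t := fun t ht ↦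
    zero_lt_one.trans_le (by simpa using ht)
  have hanti : AntitoneOn (fun t : ℝ ↦ t ^ (-b)) (Set.Icc (1 : ℕ) N) :=
    (Real.antitoneOn_rpow_Ioi_of_exponent_nonpos (by linarith)).mono fun t ht ↦ hpos t ht.1
  calc ∑ n ∈ Icc 2 N, (n : ℝ) ^ (-b) = ∑ n ∈ Ico 1 N, ((n + 1 : ℕ) : ℝ) ^ (-b) := by
        rw [← Ico_add_one_right_eq_Icc]
        exact (sum_Ico_add' (fun n : ℕ ↦ (n : ℝ) ^ (-b)) 1 N 1).symm
    _ ≤ ∫ t in Set.Ioi ((1 : ℕ) : ℝ), t ^ (-b) :=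
        hanti.sum_Ico_le_integral (integrableOn_Ioi_rpow_of_lt (by linarith) (by norm_num))
          fun t ht ↦ Real.rpow_nonneg (hpos t (Set.mem_Ioi.1 ht).le).le _
    _ = 1 / (b - 1) := by
        rw [Nat.cast_one, integral_Ioi_rpow_of_lt (by linarith) one_pos, Real.one_rpow,
          neg_div, ← div_neg]
        ring_nf

theorem sum_primesBelow_rpow_neg_le {b : ℝ} (hb : 1 < b) (N : ℕ) :
    ∑ p ∈ N.primesBelow, (p : ℝ) ^ (-b) ≤ 1 / (b - 1) := by
  refine le_trans (sum_le_sum_of_subset_of_nonneg (fun p hp ↦ ?_) fun _ _ _ ↦ by positivity)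
    (sum_Icc_two_rpow_neg_le hb N)
  exact mem_Icc.2 ⟨Nat.two_le_of_mem_primesBelow hp, (Nat.lt_of_mem_primesBelow hp).le⟩

end EulerProduct

section DirichletSeries

variable {σ a : ℝ}

theorem summable_and_tsum_tauk_sq_prime_pow_le_exp (k : ℕ) {p : ℕ} (hp : p.Prime) (hσ : 1 ≤ σ)
    (ha1 : 1 ≤ a) (ha2 : a ≤ 2) :
    Summable (fun n ↦ (tauk k ((p ^ n) ^ 2) : ℝ) / ((p ^ n : ℕ) : ℝ) ^ σ) ∧
      ∑' n, (tauk k ((p ^ n) ^ 2) : ℝ) / ((p ^ n : ℕ) : ℝ) ^ σ ≤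
        Real.exp (3 * (k : ℝ) ^ a * (p : ℝ) ^ (-(a * σ / 2))) := by
  have hp0 : (0 : ℝ) ≤ p := p.cast_nonneg
  set x : ℝ := (p : ℝ) ^ (-(σ / 2)) with hx
  have hx0 : 0 ≤ x := by positivity
  have hx2 : x ^ 2 ≤ 1 / 2 := by
    calc x ^ 2 = (p : ℝ) ^ (-σ) := by
          rw [hx, ← Real.rpow_mul_natCast hp0]
          ring_nf
      _ ≤ (p : ℝ) ^ (-1 : ℝ) :=
          Real.rpow_le_rpow_of_exponent_le (mod_cast hp.one_lt.le) (by linarith)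
      _ ≤ 1 / 2 := by
          rw [Real.rpow_neg_one, one_div]
          exact inv_anti₀ two_pos (mod_cast hp.two_le)
  have hterm : ∀ n, (tauk k ((p ^ n) ^ 2) : ℝ) / ((p ^ n : ℕ) : ℝ) ^ σ =
      (k.multichoose (2 * n) : ℝ) * x ^ (2 * n) := by
    intro n
    have hpow : x ^ (2 * n) = (((p ^ n : ℕ) : ℝ) ^ σ)⁻¹ := by
      rw [hx, ← Real.rpow_mul_natCast hp0, Nat.cast_pow, ← Real.rpow_natCast_mul hp0,
        ← Real.rpow_neg hp0]
      push_cast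
      ring_nf
    rw [← pow_mul, mul_comm n 2, tauk_prime_pow k _ hp, hpow, div_eq_mul_inv]
  have hexponent : 3 * (k * x) ^ a = 3 * (k : ℝ) ^ a * (p : ℝ) ^ (-(a * σ / 2)) := by
    rw [Real.mul_rpow k.cast_nonneg hx0, hx, ← Real.rpow_mul hp0, mul_assoc]
    ring_nf
  simp only [hterm, ← hexponent]
  have hx1 : ‖x‖ < 1 := by rw [Real.norm_of_nonneg hx0]; nlinarith
  exact ⟨summable_multichoose_two_mul_mul_pow k hx1,
    tsum_multichoose_two_mul_mul_pow_le_exp_rpow k ha1 ha2 hx0 hx2⟩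

theorem summable_and_tsum_tauk_sq_div_rpow_le_exp (k : ℕ) (ha1 : 1 ≤ a) (ha2 : a ≤ 2)
    (haσ : 2 < a * σ) :
    Summable (fun m : ℕ ↦ (tauk k (m ^ 2) : ℝ) / (m : ℝ) ^ σ) ∧
      ∑' m : ℕ, (tauk k (m ^ 2) : ℝ) / (m : ℝ) ^ σ ≤
        Real.exp (6 * (k : ℝ) ^ a / (a * σ - 2)) := by
  have hσ : 1 ≤ σ := by nlinarith
  have hlocal {p : ℕ} (hp : p.Prime) := summable_and_tsum_tauk_sq_prime_pow_le_exp k hp hσ ha1 ha2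
  refine summable_and_tsum_le_exp_of_prime_pow (fun m ↦ by positivity) (by simp [tauk_zero_right])
    (by simp [tauk_one_right]) (fun {m n} hmn ↦ ?_) (fun hp ↦ (hlocal hp).1)
    (fun hp ↦ (hlocal hp).2) fun N ↦ ?_
  · rw [mul_pow, tauk_mul_of_coprime k (hmn.pow 2 2), Nat.cast_mul, Nat.cast_mul,
      Real.mul_rpow m.cast_nonneg n.cast_nonneg, mul_div_mul_comm]
  · calc ∑ p ∈ N.primesBelow, 3 * (k : ℝ) ^ a * (p : ℝ) ^ (-(a * σ / 2))
        = 3 * (k : ℝ) ^ a * ∑ p ∈ N.primesBelow, (p : ℝ) ^ (-(a * σ / 2)) := (mul_sum ..).symm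
      _ ≤ 3 * (k : ℝ) ^ a * (1 / (a * σ / 2 - 1)) := by
          gcongr
          exact sum_primesBelow_rpow_neg_le (by linarith) N
      _ = 6 * (k : ℝ) ^ a / (a * σ - 2) := by
          have hne : a * σ - 2 ≠ 0 := by linarith
          field_simp
          ring

theorem summable_and_tsum_tauk_sq_div_rpow_le_rpow {k : ℕ} (hk : 1 < k) (hσ0 : 0 < σ)
    (hσ2 : σ ≤ 2) (hlog : 2 / σ + (Real.log k)⁻¹ ≤ 2) :
    Summable (fun m : ℕ ↦ (tauk k (m ^ 2) : ℝ) / (m : ℝ) ^ σ) ∧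
      ∑' m : ℕ, (tauk k (m ^ 2) : ℝ) / (m : ℝ) ^ σ ≤
        (k : ℝ) ^ (6 * Real.exp 1 / σ * (k : ℝ) ^ (2 / σ)) := by
  have hk1 : (1 : ℝ) < k := mod_cast hk
  have hk0 : (0 : ℝ) < k := by positivity
  have hlogk : 0 < Real.log k := Real.log_pos hk1
  have ha1 : 1 ≤ 2 / σ + (Real.log k)⁻¹ := by
    have : 1 ≤ 2 / σ := (one_le_div hσ0).2 hσ2
    have : 0 < (Real.log k)⁻¹ := inv_pos.2 hlogk
    linarith
  have haσ : (2 / σ + (Real.log k)⁻¹) * σ - 2 = σ / Real.log k := by field_simp; ring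
  have hexponent : Real.exp (6 * (k : ℝ) ^ (2 / σ + (Real.log k)⁻¹) /
      ((2 / σ + (Real.log k)⁻¹) * σ - 2)) =
        (k : ℝ) ^ (6 * Real.exp 1 / σ * (k : ℝ) ^ (2 / σ)) := by
    rw [haσ, Real.rpow_add hk0, Real.rpow_inv_log hk0 hk1.ne',
      Real.rpow_def_of_pos hk0 (6 * Real.exp 1 / σ * _)]
    field_simp
  rw [← hexponent]
  have : 0 < σ / Real.log k := by positivity
  exact summable_and_tsum_tauk_sq_div_rpow_le_exp k ha1 hlog (by linarith)

end DirichletSeries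

theorem exists_forall_add_inv_log_le {c d : ℝ} (h : c < d) :
    ∃ k₀ : ℕ, ∀ k ≥ k₀, 1 < k ∧ c + (Real.log k)⁻¹ ≤ d := by
  have hlim : Filter.Tendsto (fun k : ℕ ↦ c + (Real.log k)⁻¹) Filter.atTop (nhds (c + 0)) :=
    ((Real.tendsto_log_atTop.comp tendsto_natCast_atTop_atTop).inv_tendsto_atTop).const_add c
  rw [add_zero] at hlim
  exact Filter.eventually_atTop.1
    ((Filter.eventually_gt_atTop 1).and (hlim.eventually_le_const h))

theorem tsum_tauk_sq_div_rpow_le_general {σ₀ : ℝ} (hσ₀ : 1 < σ₀) :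
    ∃ k₀ : ℕ, ∀ k : ℕ, k₀ ≤ k → ∀ σ : ℝ, σ₀ ≤ σ → σ ≤ 2 →
      Summable (fun m : ℕ => (tauk k ((m + 1) ^ 2) : ℝ) / ((m : ℝ) + 1) ^ σ) ∧
      ∑' m : ℕ, (tauk k ((m + 1) ^ 2) : ℝ) / ((m : ℝ) + 1) ^ σ ≤
        (k : ℝ) ^ (18 / σ₀ * (k : ℝ) ^ (2 / σ)) := by
  have hσ₀2 : 2 / σ₀ < 2 := div_lt_self two_pos hσ₀
  obtain ⟨k₀, hk₀⟩ := exists_forall_add_inv_log_le hσ₀2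
  refine ⟨k₀, fun k hk σ hσ hσ2 ↦ ?_⟩
  obtain ⟨hk1, hlog⟩ := hk₀ k hk
  have hdiv : 2 / σ ≤ 2 / σ₀ := by gcongr
  obtain ⟨hsum, hle⟩ :=
    summable_and_tsum_tauk_sq_div_rpow_le_rpow hk1 (by linarith) hσ2 (by linarith)
  have hshift := hsum.tsum_eq_zero_add
  have hsum' := (summable_nat_add_iff 1).2 hsum
  simp only [Nat.cast_add_one] at hshift hsum'
  rw [zero_pow two_ne_zero, tauk_zero_right, Nat.cast_zero, zero_div, zero_add] at hshift
  refine ⟨hsum', hshift ▸ hle.trans ?_⟩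
  gcongr
  · exact mod_cast hk1.le
  · linarith [Real.exp_one_lt_three]

theorem tsum_tauk_sq_div_rpow_le :
    ∃ K : ℝ, 0 < K ∧ ∃ k₀ : ℕ, ∀ k : ℕ, k₀ ≤ k → ∀ σ : ℝ, 9 / 5 ≤ σ → σ ≤ 2 →
      Summable (fun m : ℕ => (tauk k ((m + 1) ^ 2) : ℝ) / ((m : ℝ) + 1) ^ σ) ∧
      ∑' m : ℕ, (tauk k ((m + 1) ^ 2) : ℝ) / ((m : ℝ) + 1) ^ σ ≤
        K * (k : ℝ) ^ (10 * (k : ℝ) ^ (2 / σ)) := by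
  obtain ⟨k₀, h⟩ := tsum_tauk_sq_div_rpow_le_general (σ₀ := 9 / 5) (by norm_num)
  rw [show (18 : ℝ) / (9 / 5) = 10 by norm_num] at h
  exact ⟨1, one_pos, k₀, by simpa only [one_mul] using h⟩
end

section
/- There exist absolute constants c > 0 and K > 0 such that the following holds: for every real σ ∈ [1/2, 1], every real X ≥ 10, every real Y with X^σ ≤ Y ≤ X, and every natural number ν with ⌊σν⌋ ≥ 1, the number of squarefree integers n ∈ [X, X+Y] with exactly ν distinct prime factors is at most K · Y · (log log X + c)^{ν_σ} / (ν_σ − 1)!, where ν_σ = ⌊σν⌋. -/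
open scoped Classical

/-!
If `σ * ω(n) ≥ k`, then the product `d` of the `k` smallest prime factors of `n` is at most `n ^ σ`.
For `n ∈ [X, X + Y]` this gives `d ≤ (2 * X) ^ σ ≤ 2 * Y`, so that at most `Y / d + 1 ≤ 3 * Y / d`
integers of the interval are multiples of `d`. Summing `1 / d` over all products of `k` distinct
primes up to `2 * X` costs at most `(∑ 1 / p) ^ k / k!`, and `∑ 1 / p ≤ log log X + 5` by Mertens.

For this last bound, `1 / p` is compared with `p ^ (-(1 + ε))` for `ε = 1 / log N`. The Euler
product bounds the sum of the latter over the primes by `log ζ(1 + ε) ≤ log (1 + 1 / ε)`, and the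
error is at most `ε * ∑ log p / p`, which is bounded by counting the prime factors of `N!`.
-/

open Finset
open scoped Nat

section ElementarySymmetric

variable {R : Type*} [CommSemiring R]

lemma esymm_cons_succ (a : R) (s : Multiset R) (k : ℕ) :
    (a ::ₘ s).esymm (k + 1) = s.esymm (k + 1) + a * s.esymm k := by
  simp [Multiset.esymm, Multiset.powersetCard_cons, Multiset.sum_map_mul_left]

lemma factorial_mul_esymm_le_sum_pow [PartialOrder R] [IsOrderedRing R] {s : Multiset R}
    (hs : ∀ a ∈ s, 0 ≤ a) (k : ℕ) : k ! * s.esymm k ≤ s.sum ^ k := by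
  induction s using Multiset.induction_on generalizing k with
  | empty => cases k <;> simp [Multiset.esymm, Multiset.powersetCard_zero_right]
  | cons a s ih =>
    rw [Multiset.forall_mem_cons] at hs
    obtain ⟨ha, hs⟩ := hs
    have hsum : 0 ≤ s.sum := Multiset.sum_nonneg hs
    cases k with
    | zero => simp [Multiset.esymm]
    | succ k =>
      calc ((k + 1)! : R) * (a ::ₘ s).esymm (k + 1)
          = (k + 1)! * s.esymm (k + 1) + (k + 1 : ℕ) * (k ! * s.esymm k) * a := by
            rw [esymm_cons_succ, Nat.factorial_succ]; push_cast; ring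
        _ ≤ s.sum ^ (k + 1) + (k + 1 : ℕ) * s.sum ^ k * a := by
            gcongr
            exacts [ih hs _, ih hs _]
        _ ≤ (s.sum + a) ^ (k + 1) :=
            pow_add_mul_le_add_pow_of_sq_nonneg hsum (pow_nonneg ha 2)
              (pow_nonneg (add_nonneg hsum ha) 2)
              (add_nonneg (mul_nonneg zero_le_two hsum) ha) (k + 1)
        _ = (a ::ₘ s).sum ^ (k + 1) := by rw [Multiset.sum_cons, add_comm]

end ElementarySymmetric

lemma sum_powersetCard_prod_le {ι K : Type*} [Field K] [LinearOrder K] [IsStrictOrderedRing K]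
    {f : ι → K} {s : Finset ι} (hf : ∀ i ∈ s, 0 ≤ f i) (k : ℕ) :
    ∑ t ∈ s.powersetCard k, ∏ i ∈ t, f i ≤ (∑ i ∈ s, f i) ^ k / k ! := by
  rw [le_div_iff₀' (by positivity), ← Finset.esymm_map_val]
  exact factorial_mul_esymm_le_sum_pow (by simpa using hf) k

lemma exists_subset_card_eq_prod_pow_card_le {ι R : Type*} [CommSemiring R] [LinearOrder R]
    [IsStrictOrderedRing R] {f : ι → R} {s : Finset ι} (hf : ∀ i ∈ s, 0 ≤ f i) {k : ℕ}
    (hk : k ≤ #s) : ∃ t ⊆ s, #t = k ∧ (∏ i ∈ t, f i) ^ #s ≤ (∏ i ∈ s, f i) ^ k := by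
  induction s using Finset.induction_on_max_value f with
  | empty => exact ⟨∅, by simp_all⟩
  | insert a s ha hmax ih =>
    rw [card_insert_of_notMem ha] at hk
    obtain rfl | hks : k = #s + 1 ∨ k ≤ #s := by lia
    · exact ⟨insert a s, by simp [ha]⟩
    obtain rfl | hs := s.eq_empty_or_nonempty
    · exact ⟨∅, by simp_all⟩
    -- Dropping the largest factor `f a` cannot raise the geometric mean.
    have hfs : ∀ i ∈ s, 0 ≤ f i := fun i hi ↦ hf i (mem_insert_of_mem hi)
    obtain ⟨t, hts, htk, ht⟩ := ih hfs hks
    refine ⟨t, hts.trans (subset_insert a s), htk, ?_⟩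
    have hfa : 0 ≤ f a := hf a (mem_insert_self a s)
    have hPt : 0 ≤ ∏ i ∈ t, f i := prod_nonneg fun i hi ↦ hfs i (hts hi)
    have hPs : 0 ≤ ∏ i ∈ s, f i := prod_nonneg hfs
    have hPs_le : ∏ i ∈ s, f i ≤ f a ^ #s :=
      prod_const (f a) (s := s) ▸ prod_le_prod hfs hmax
    rw [card_insert_of_notMem ha, prod_insert ha]
    refine le_of_pow_le_pow_left₀ hs.card_ne_zero (by positivity) ?_
    calc ((∏ i ∈ t, f i) ^ (#s + 1)) ^ #s = ((∏ i ∈ t, f i) ^ #s) ^ (#s + 1) := by ring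
      _ ≤ ((∏ i ∈ s, f i) ^ k) ^ (#s + 1) := by gcongr
      _ = ((∏ i ∈ s, f i) * (∏ i ∈ s, f i) ^ #s) ^ k := by ring
      _ ≤ (f a ^ #s * (∏ i ∈ s, f i) ^ #s) ^ k := by gcongr
      _ = ((f a * ∏ i ∈ s, f i) ^ k) ^ #s := by ring

lemma exists_subset_primeFactors_prod_le_rpow {n k : ℕ} {σ : ℝ} (hn : n ≠ 0) (hσ : σ ≤ 1)
    (hk : k ≤ σ * #n.primeFactors) :
    ∃ t ⊆ n.primeFactors, #t = k ∧ ((∏ p ∈ t, p : ℕ) : ℝ) ≤ (n : ℝ) ^ σ := by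
  obtain rfl | hn1 := eq_or_ne n 1
  · exact ⟨∅, by simp_all⟩
  have hω : #n.primeFactors ≠ 0 := by simp [hn, hn1]
  have hkω : k ≤ #n.primeFactors := mod_cast hk.trans (mul_le_of_le_one_left (by positivity) hσ)
  obtain ⟨t, ht, htk, hprod⟩ := exists_subset_card_eq_prod_pow_card_le
    (f := fun p : ℕ ↦ p) (s := n.primeFactors) (fun _ _ ↦ Nat.zero_le _) hkω
  refine ⟨t, ht, htk, le_of_pow_le_pow_left₀ hω (by positivity) ?_⟩
  have hn_le : (1 : ℝ) ≤ n := mod_cast Nat.one_le_iff_ne_zero.2 hn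
  calc ((∏ p ∈ t, p : ℕ) : ℝ) ^ #n.primeFactors ≤ ((∏ p ∈ n.primeFactors, p : ℕ) : ℝ) ^ k :=
        mod_cast hprod
    _ ≤ (n : ℝ) ^ k := by
        gcongr
        exact Nat.le_of_dvd (Nat.pos_of_ne_zero hn) (Nat.prod_primeFactors_dvd n)
    _ ≤ (n : ℝ) ^ (σ * #n.primeFactors) := by
        rw [← Real.rpow_natCast]
        exact Real.rpow_le_rpow_of_exponent_le hn_le hk
    _ = ((n : ℝ) ^ σ) ^ #n.primeFactors := Real.rpow_mul_natCast n.cast_nonneg _ _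

section IntervalCount

variable {K : Type*} [Field K] [LinearOrder K] [IsStrictOrderedRing K] [FloorSemiring K] {x y : K}

lemma card_Icc_ceil_floor_le (hy : 0 ≤ y) (hxy : x ≤ y) :
    (#(Icc ⌈x⌉₊ ⌊y⌋₊) : K) ≤ y - x + 1 := by
  rw [Nat.card_Icc]
  obtain h | h := le_total ⌈x⌉₊ (⌊y⌋₊ + 1)
  · rw [Nat.cast_sub h]
    push_cast
    linarith [Nat.le_ceil x, Nat.floor_le hy]
  · rw [Nat.sub_eq_zero_of_le h, Nat.cast_zero]
    linarith

lemma card_filter_dvd_Icc_le (hy : 0 ≤ y) (hxy : x ≤ y) {d : ℕ} (hd : 0 < d) :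
    (#{n ∈ Icc ⌈x⌉₊ ⌊y⌋₊ | d ∣ n} : K) ≤ (y - x) / d + 1 := by
  have hsub : {n ∈ Icc ⌈x⌉₊ ⌊y⌋₊ | d ∣ n} ⊆ (Icc ⌈x / d⌉₊ ⌊y / d⌋₊).image (d * ·) := by
    intro n hn
    simp only [mem_filter, Finset.mem_Icc, Nat.ceil_le, Nat.le_floor_iff hy] at hn
    obtain ⟨⟨hxn, hny⟩, m, rfl⟩ := hn
    push_cast at hxn hny
    refine mem_image_of_mem _ (Finset.mem_Icc.2 ⟨Nat.ceil_le.2 ?_, Nat.le_floor ?_⟩)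
    · exact (div_le_iff₀' (by positivity)).2 hxn
    · exact (le_div_iff₀' (by positivity)).2 hny
  calc (#{n ∈ Icc ⌈x⌉₊ ⌊y⌋₊ | d ∣ n} : K) ≤ #(Icc ⌈x / d⌉₊ ⌊y / d⌋₊) :=
        mod_cast (card_le_card hsub).trans card_image_le
    _ ≤ y / d - x / d + 1 := card_Icc_ceil_floor_le (by positivity) (by gcongr)
    _ = (y - x) / d + 1 := by rw [sub_div]

lemma card_filter_dvd_Icc_le_mul_inv (hy : 0 ≤ y) (hxy : x ≤ y) {C : K} {d : ℕ} (hd : 0 < d)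
    (hdC : d ≤ C * (y - x)) :
    (#{n ∈ Icc ⌈x⌉₊ ⌊y⌋₊ | d ∣ n} : K) ≤ (C + 1) * (y - x) * (d : K)⁻¹ := by
  have : 1 ≤ C * (y - x) * (d : K)⁻¹ := by
    rwa [← div_eq_mul_inv, one_le_div₀ (by positivity)]
  linear_combination card_filter_dvd_Icc_le hy hxy hd + this

lemma card_le_of_forall_exists_prod_dvd (hy : 0 ≤ y) (hxy : x ≤ y) {A P : Finset ℕ} {C : K} {k : ℕ}
    (hC : 0 ≤ C) (hP : ∀ p ∈ P, 0 < p) (hA : A ⊆ Icc ⌈x⌉₊ ⌊y⌋₊)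
    (h : ∀ n ∈ A, ∃ t ∈ P.powersetCard k, ((∏ p ∈ t, p : ℕ) : K) ≤ C * (y - x) ∧ ∏ p ∈ t, p ∣ n) :
    (#A : K) ≤ (C + 1) * (y - x) * ((∑ p ∈ P, (p : K)⁻¹) ^ k / k !) := by
  have : 0 ≤ y - x := sub_nonneg.2 hxy
  let W := {t ∈ P.powersetCard k | ((∏ p ∈ t, p : ℕ) : K) ≤ C * (y - x)}
  have hcover : A ⊆ W.biUnion fun t ↦ {n ∈ Icc ⌈x⌉₊ ⌊y⌋₊ | ∏ p ∈ t, p ∣ n} := fun n hn ↦ by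
    obtain ⟨t, ht, htC, htn⟩ := h n hn
    exact mem_biUnion.2 ⟨t, mem_filter.2 ⟨ht, htC⟩, mem_filter.2 ⟨hA hn, htn⟩⟩
  calc (#A : K) ≤ ∑ t ∈ W, (#{n ∈ Icc ⌈x⌉₊ ⌊y⌋₊ | ∏ p ∈ t, p ∣ n} : K) :=
        mod_cast (card_le_card hcover).trans card_biUnion_le
    _ ≤ ∑ t ∈ W, (C + 1) * (y - x) * ∏ p ∈ t, (p : K)⁻¹ := by
        refine sum_le_sum fun t ht ↦ ?_
        obtain ⟨htP, htC⟩ := mem_filter.1 ht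
        have hpos : 0 < ∏ p ∈ t, p := prod_pos fun p hp ↦ hP p ((mem_powersetCard.1 htP).1 hp)
        simpa only [Nat.cast_prod, prod_inv_distrib] using
          card_filter_dvd_Icc_le_mul_inv hy hxy hpos htC
    _ ≤ ∑ t ∈ P.powersetCard k, (C + 1) * (y - x) * ∏ p ∈ t, (p : K)⁻¹ :=
        sum_le_sum_of_subset_of_nonneg (filter_subset _ _) fun _ _ _ ↦ by positivity
    _ ≤ (C + 1) * (y - x) * ((∑ p ∈ P, (p : K)⁻¹) ^ k / k !) := by
        rw [← mul_sum]
        gcongr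
        exact sum_powersetCard_prod_le (fun p _ ↦ by positivity) k

end IntervalCount

lemma div_le_factorization_factorial {p : ℕ} (hp : p.Prime) (n : ℕ) :
    n / p ≤ (n !).factorization p := by
  rw [Nat.factorization_factorial hp (Nat.lt_add_of_pos_right two_pos)]
  simpa using single_le_sum (f := fun i ↦ n / p ^ i) (fun _ _ ↦ Nat.zero_le _)
    (show 1 ∈ Ico 1 (Nat.log p n + 2) by simp)

lemma primeFactors_factorial (n : ℕ) : (n !).primeFactors = n.primesLE := by
  ext p
  rw [Nat.mem_primeFactors_of_ne_zero (Nat.factorial_ne_zero n), Nat.mem_primesLE, and_comm]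
  exact and_congr_left fun hp ↦ hp.dvd_factorial

lemma sum_primesLE_div_mul_log_le_log_factorial (n : ℕ) :
    ∑ p ∈ n.primesLE, ((n / p : ℕ) : ℝ) * Real.log p ≤ Real.log n ! := by
  rw [Real.log_nat_eq_sum_factorization, Finsupp.sum, Nat.support_factorization,
    primeFactors_factorial]
  gcongr with p hp
  exact div_le_factorization_factorial (Nat.prime_of_mem_primesLE hp) n

lemma sum_primesLE_log_div_le {n : ℕ} (hn : n ≠ 0) :
    ∑ p ∈ n.primesLE, Real.log p / p ≤ Real.log n + Real.log 4 := by
  have hfactorial : Real.log n ! ≤ n * Real.log n := by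
    rw [← Real.log_pow]
    exact Real.log_le_log (by positivity) (mod_cast Nat.factorial_le_pow n)
  have hchebyshev : ∑ p ∈ n.primesLE, Real.log p ≤ Real.log 4 * n := by
    rw [← Chebyshev.theta_eq_sum_primesLE_log]
    exact Chebyshev.theta_le_log4_mul_x n.cast_nonneg
  refine le_of_mul_le_mul_left ?_ (show 0 < (n : ℝ) by positivity)
  calc n * ∑ p ∈ n.primesLE, Real.log p / p
      = ∑ p ∈ n.primesLE, (n / p : ℝ) * Real.log p := by
        rw [mul_sum]; exact sum_congr rfl fun p _ ↦ by ring
    _ ≤ ∑ p ∈ n.primesLE, (((n / p : ℕ) : ℝ) * Real.log p + Real.log p) := by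
        gcongr with p
        rw [← add_one_mul]
        gcongr
        rw [← Nat.floor_div_eq_div (K := ℝ)]
        exact (Nat.lt_floor_add_one _).le
    _ ≤ n * Real.log n + Real.log 4 * n := by
        rw [sum_add_distrib]
        exact add_le_add ((sum_primesLE_div_mul_log_le_log_factorial n).trans hfactorial) hchebyshev
    _ = n * (Real.log n + Real.log 4) := by ring

lemma sum_prime_le_log_tsum {f : ℕ →* ℝ} (hf : ∀ n, 0 ≤ f n) (hsum : Summable f) (s : Finset ℕ) :
    ∑ p ∈ s with p.Prime, f p ≤ Real.log (∑' n, f n) := by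
  have hlt {p : ℕ} (hp : p.Prime) : f p < 1 :=
    (le_abs_self _).trans_lt (hsum.norm_lt_one hp.one_lt)
  have hpos : ∀ p ∈ {p ∈ s | p.Prime}, (0 : ℝ) < (1 - f p)⁻¹ := fun p hp ↦
    inv_pos.2 (sub_pos.2 (hlt (mem_filter.1 hp).2))
  calc ∑ p ∈ s with p.Prime, f p ≤ ∑ p ∈ s with p.Prime, Real.log (1 - f p)⁻¹ := by
        gcongr with p hp
        rw [Real.log_inv]
        linarith [Real.log_le_sub_one_of_pos (inv_pos.1 (hpos p hp))]
    _ = Real.log (∏ p ∈ s with p.Prime, (1 - f p)⁻¹) :=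
        (Real.log_prod fun p hp ↦ (hpos p hp).ne').symm
    _ ≤ Real.log (∑' n, f n) := by
        refine Real.log_le_log (prod_pos hpos) ?_
        rw [EulerProduct.prod_filter_prime_geometric_eq_tsum_factoredNumbers hsum]
        exact hsum.tsum_subtype_le f _ hf

lemma tsum_nat_rpow_neg_le {s : ℝ} (hs : 1 < s) : ∑' n : ℕ, (n : ℝ) ^ (-s) ≤ 1 + (s - 1)⁻¹ := by
  have hzero : ((0 : ℕ) : ℝ) ^ (-s) = 0 := by simp [Real.zero_rpow (by linarith : -s ≠ 0)]
  have hshift : ∑' n : ℕ, ((n + 1 : ℕ) : ℝ) ^ (-s) = ∑' n : ℕ, 1 / (n + 1 : ℝ) ^ s :=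
    tsum_congr fun n ↦ by rw [Real.rpow_neg (by positivity), one_div, Nat.cast_succ]
  rw [(Real.summable_nat_rpow.2 (by linarith)).tsum_eq_zero_add, hzero, hshift, zero_add]
  have hterm : 0 ≤ s * ZetaAsymptotics.termTSum s :=
    mul_nonneg (by linarith) (tsum_nonneg fun n ↦ ZetaAsymptotics.term_nonneg (n + 1) s)
  rw [← one_div]
  linarith [ZetaAsymptotics.zeta_limit_aux1 hs]

lemma sum_primesLE_rpow_neg_le {s : ℝ} (hs : 1 < s) (n : ℕ) :
    ∑ p ∈ n.primesLE, (p : ℝ) ^ (-s) ≤ Real.log (1 + (s - 1)⁻¹) := by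
  let f : ℕ →* ℝ :=
    { toFun m := (m : ℝ) ^ (-s)
      map_one' := by simp
      map_mul' a b := by rw [Nat.cast_mul, Real.mul_rpow a.cast_nonneg b.cast_nonneg] }
  have hf (m : ℕ) : 0 ≤ f m := Real.rpow_nonneg m.cast_nonneg _
  have hsum : Summable f := Real.summable_nat_rpow.2 (by linarith)
  have htsum : 1 ≤ ∑' m, f m := map_one f ▸ hsum.le_tsum 1 fun m _ ↦ hf m
  calc ∑ p ∈ n.primesLE, (p : ℝ) ^ (-s) ≤ Real.log (∑' m, f m) := sum_prime_le_log_tsum hf hsum _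
    _ ≤ Real.log (1 + (s - 1)⁻¹) := Real.log_le_log (by linarith) (tsum_nat_rpow_neg_le hs)

lemma inv_le_rpow_neg_one_add {x : ℝ} (hx : 0 < x) (ε : ℝ) :
    x⁻¹ ≤ x ^ (-(1 + ε)) + ε * (Real.log x / x) := by
  have hrpow : x ^ (-(1 + ε)) = x⁻¹ * Real.exp (-(ε * Real.log x)) := by
    rw [neg_add, Real.rpow_add hx, Real.rpow_neg_one, Real.rpow_def_of_pos hx]
    ring_nf
  have := mul_le_mul_of_nonneg_left (Real.add_one_le_exp (-(ε * Real.log x))) (inv_nonneg.2 hx.le)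
  rw [hrpow]
  linear_combination this

lemma sum_primesLE_inv_le {n : ℕ} (hn : 1 < n) :
    ∑ p ∈ n.primesLE, (p : ℝ)⁻¹ ≤ Real.log (Real.log n + 1) + 3 := by
  have hlog_two : Real.log 2 ≤ Real.log n := Real.log_le_log two_pos (mod_cast hn)
  have hlog_pos : 0 < Real.log n := Real.log_pos (mod_cast hn)
  set ε := (Real.log n)⁻¹ with hε
  have hε_pos : 0 < ε := inv_pos.2 hlog_pos
  calc ∑ p ∈ n.primesLE, (p : ℝ)⁻¹
      ≤ ∑ p ∈ n.primesLE, ((p : ℝ) ^ (-(1 + ε)) + ε * (Real.log p / p)) := by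
        gcongr with p hp
        exact inv_le_rpow_neg_one_add (mod_cast (Nat.prime_of_mem_primesLE hp).pos) ε
    _ = ∑ p ∈ n.primesLE, (p : ℝ) ^ (-(1 + ε)) + ε * ∑ p ∈ n.primesLE, Real.log p / p := by
        rw [sum_add_distrib, mul_sum]
    _ ≤ Real.log (1 + (1 + ε - 1)⁻¹) + ε * (3 * Real.log n) := by
        gcongr
        · exact sum_primesLE_rpow_neg_le (by linarith) n
        · linarith [sum_primesLE_log_div_le (by lia : n ≠ 0), Real.log_four_eq]
    _ = Real.log (Real.log n + 1) + 3 := by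
        rw [add_sub_cancel_left, hε, inv_inv, add_comm 1]
        field_simp

lemma sum_primesLE_floor_two_mul_inv_le {x : ℝ} (hx : 2 ≤ x) :
    ∑ p ∈ ⌊2 * x⌋₊.primesLE, (p : ℝ)⁻¹ ≤ Real.log (Real.log x) + 5 := by
  have hlog_two : Real.log 2 ≤ Real.log x := Real.log_le_log two_pos hx
  have hone_lt_floor : 1 < ⌊2 * x⌋₊ := Nat.le_floor (by push_cast; linarith)
  have hlog_floor : Real.log ⌊2 * x⌋₊ ≤ Real.log 2 + Real.log x := by
    rw [← Real.log_mul two_ne_zero (by linarith)]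
    exact Real.log_le_log (mod_cast Nat.zero_lt_of_lt hone_lt_floor) (Nat.floor_le (by linarith))
  calc ∑ p ∈ ⌊2 * x⌋₊.primesLE, (p : ℝ)⁻¹ ≤ Real.log (Real.log ⌊2 * x⌋₊ + 1) + 3 :=
        sum_primesLE_inv_le hone_lt_floor
    _ ≤ Real.log (4 * Real.log x) + 3 := by
        gcongr
        linarith [Real.log_two_gt_d9]
    _ = Real.log 4 + Real.log (Real.log x) + 3 := by
        rw [Real.log_mul four_ne_zero (by linarith [Real.log_two_gt_d9])]
    _ ≤ Real.log (Real.log x) + 5 := by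
        linarith [Real.log_two_lt_d9, Real.log_four_eq]

theorem hardy_ramanujan_short_interval_general {σ X Y : ℝ} (hσ₀ : 0 ≤ σ) (hσ₁ : σ ≤ 1) (hX : 2 ≤ X)
    (hXY : X ^ σ ≤ Y) (hYX : Y ≤ X) (k : ℕ) :
    (#{n ∈ Icc ⌈X⌉₊ ⌊X + Y⌋₊ | (k : ℝ) ≤ σ * #n.primeFactors} : ℝ) ≤
      3 * Y * ((Real.log (Real.log X) + 5) ^ k / k !) := by
  have hY : 0 ≤ Y := (Real.rpow_nonneg (by linarith) σ).trans hXY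
  have hsmall {n : ℕ} (hn : n ≤ 2 * X) : (n : ℝ) ^ σ ≤ 2 * Y :=
    calc (n : ℝ) ^ σ ≤ (2 * X) ^ σ := by gcongr
      _ = 2 ^ σ * X ^ σ := Real.mul_rpow two_pos.le (by linarith)
      _ ≤ 2 * Y := by
        gcongr
        exact Real.rpow_le_self_of_one_le one_le_two hσ₁
  have hcount := card_le_of_forall_exists_prod_dvd (x := X) (y := X + Y) (C := 2) (k := k)
    (P := ⌊2 * X⌋₊.primesLE)
    (A := {n ∈ Icc ⌈X⌉₊ ⌊X + Y⌋₊ | (k : ℝ) ≤ σ * #n.primeFactors})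
    (by linarith) (by linarith) two_pos.le (fun p hp ↦ (Nat.prime_of_mem_primesLE hp).pos)
    (filter_subset _ _) fun n hn ↦ by
      obtain ⟨hnI, hkn⟩ := mem_filter.1 hn
      obtain ⟨hXn, hnXY⟩ := Finset.mem_Icc.1 hnI
      have hn0 : n ≠ 0 := (Nat.ceil_pos.2 (by linarith) |>.trans_le hXn).ne'
      have hn_le : (n : ℝ) ≤ 2 * X := by
        linarith [(Nat.le_floor_iff (by linarith)).1 hnXY]
      obtain ⟨t, ht, htk, hprod⟩ := exists_subset_primeFactors_prod_le_rpow hn0 hσ₁ hkn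
      refine ⟨t, mem_powersetCard.2 ⟨fun p hp ↦ ?_, htk⟩, ?_, ?_⟩
      · exact Nat.mem_primesLE.2 ⟨(Nat.le_of_mem_primeFactors (ht hp)).trans (Nat.le_floor hn_le),
          Nat.prime_of_mem_primeFactors (ht hp)⟩
      · simpa only [add_sub_cancel_left] using hprod.trans (hsmall hn_le)
      · exact (prod_dvd_prod_of_subset t n.primeFactors _ ht).trans (Nat.prod_primeFactors_dvd n)
  rw [add_sub_cancel_left, two_add_one_eq_three] at hcount
  refine hcount.trans ?_
  gcongr
  exact sum_primesLE_floor_two_mul_inv_le hX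

theorem hardy_ramanujan_short_interval :
    ∃ c K : ℝ, 0 < c ∧ 0 < K ∧
      ∀ σ X Y : ℝ, 1 / 2 ≤ σ → σ ≤ 1 → 10 ≤ X → X ^ σ ≤ Y → Y ≤ X →
      ∀ ν : ℕ, 1 ≤ ⌊σ * (ν : ℝ)⌋₊ →
        (((Finset.Icc ⌈X⌉₊ ⌊X + Y⌋₊).filter fun n =>
            Squarefree n ∧ n.primeFactors.card = ν).card : ℝ) ≤
          K * Y * (Real.log (Real.log X) + c) ^ ⌊σ * (ν : ℝ)⌋₊ /
            (Nat.factorial (⌊σ * (ν : ℝ)⌋₊ - 1)) := by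
  refine ⟨5, 3, by norm_num, by norm_num, fun σ X Y hσ hσ₁ hX hXY hYX ν _ ↦ ?_⟩
  have hY : 0 ≤ Y := (Real.rpow_nonneg (by linarith) σ).trans hXY
  have hloglog : 0 ≤ Real.log (Real.log X) + 5 :=
    (sum_nonneg fun p _ ↦ by positivity).trans
      (sum_primesLE_floor_two_mul_inv_le (by linarith : 2 ≤ X))
  have hsub : {n ∈ Icc ⌈X⌉₊ ⌊X + Y⌋₊ | Squarefree n ∧ #n.primeFactors = ν} ⊆
      {n ∈ Icc ⌈X⌉₊ ⌊X + Y⌋₊ | (⌊σ * ν⌋₊ : ℝ) ≤ σ * #n.primeFactors} :=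
    monotone_filter_right _ fun n _ hn ↦ hn.2.symm ▸ Nat.floor_le (by positivity)
  calc _ ≤ _ := Nat.cast_le.2 (card_le_card hsub)
    _ ≤ 3 * Y * ((Real.log (Real.log X) + 5) ^ ⌊σ * ν⌋₊ / ⌊σ * ν⌋₊ !) :=
      hardy_ramanujan_short_interval_general (by linarith) hσ₁ (by linarith) hXY hYX _
    _ ≤ 3 * Y * ((Real.log (Real.log X) + 5) ^ ⌊σ * ν⌋₊ / (⌊σ * ν⌋₊ - 1)!) := by
      gcongr
      exact Nat.sub_le _ _
    _ = _ := (mul_div_assoc ..).symm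
end

section
/- Fix α ∈ (0,1). There exist N₀ ∈ ℕ and a constant c > 0 such that for every natural number N ≥ N₀ and every natural number k with (log log N)^3 ≤ k ≤ (log N)^α, one has ∑_{A ≤ N^k} τ_{k,N;α}(A)² ≥ c · N^k · exp( k² / (200 log log N) ). -/
open Finset

/-- `Ω(n)`: the number of prime factors of `n` counted with multiplicity. -/
def bigOmega (n : ℕ) : ℕ := n.primeFactorsList.length

/-- The set `Γ_α(R)` of `α`-regular integers of height `R`:
integers `1 ≤ m ≤ R` with `Ω(m) ≤ (log R)^α`. -/
noncomputable def Gamma (α : ℝ) (R : ℕ) : Finset ℕ :=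
  (Finset.Icc 1 R).filter fun m => (bigOmega m : ℝ) ≤ Real.log R ^ α

/-- The restricted `k`-fold divisor function `τ_{k,R;α}(A)`: the number of `k`-tuples
`(a_1, …, a_k)` with each `a_i ∈ Γ_α(R)` and `a_1 ⋯ a_k = A`. -/
noncomputable def taukRalpha (k R : ℕ) (α : ℝ) (A : ℕ) : ℕ :=
  ((Fintype.piFinset fun _ : Fin k => Gamma α R).filter fun f => ∏ i, f i = A).card

/-!
Let `P` be the set of primes in `(k ^ 2, 4 k ^ 2]`, let `Q` be the set of primes in
`(4 k ^ 2, N / (4 k ^ 2) ^ m]`, and let `S` be the set of products `p₁ ⋯ p_m q` with distinct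
`p_i ∈ P` and `q ∈ Q`. Since `S ⊆ Γ_α(N)`, Cauchy–Schwarz gives
`#S ^ (2 k) ≤ #(S ^ k) * ∑ τ_{k,N;α}(A) ^ 2`, where `S ^ k` is the set of `k`-fold products.

That set is small: each of its elements is a product of `k m` elements of `P`, which is at least
`k ^ (2 k m)`, times a cofactor, so `#(S ^ k) ≤ multichoose(#P, k m) * N ^ k / k ^ (2 k m)`. On the
other hand `#S = choose(#P, m) * #Q` by unique factorization. As `#P` is large compared with `k m`,
`choose(#P, m) ^ (2 k)` exceeds `multichoose(#P, k m)` by the factor `(16 e k ^ 2) ^ (k m)`, of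
which `(16 k ^ 2) ^ (k m)` pays for the range of `Q` and `exp (k m)` is gained. The only loss is
`(4 log N) ^ (2 k)`, from the density of the primes in the range of `Q`; it is negligible for
`m ≈ k / (195 log log N)`.
-/

open Real Filter
open scoped Pointwise ArithmeticFunction.Omega Chebyshev

section ProductSets

variable {M : Type*} [CommMonoid M] [DecidableEq M]

lemma multiset_prod_mem_pow_card {s : Finset M} (t : Multiset M) (ht : ∀ a ∈ t, a ∈ s) :
    t.prod ∈ s ^ t.card := by
  induction t using Multiset.induction with
  | empty => simp
  | cons a t ih =>
    rw [Multiset.prod_cons, Multiset.card_cons, pow_succ']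
    exact mul_mem_mul (ht a (Multiset.mem_cons_self a t))
      (ih fun b hb => ht b (Multiset.mem_cons_of_mem hb))

lemma card_pow_le_multichoose (s : Finset M) (n : ℕ) : #(s ^ n) ≤ (#s).multichoose n := by
  have hsub : s ^ n ⊆ univ.image fun t : Sym s n => ((t : Multiset s).map (↑)).prod := by
    intro a ha
    obtain ⟨f, rfl⟩ := mem_pow.mp ha
    refine mem_image.mpr ⟨⟨(List.ofFn f : Multiset s), by simp⟩, mem_univ _, ?_⟩
    simp [List.map_ofFn, Function.comp_def]
  calc #(s ^ n) ≤ #(univ : Finset (Sym s n)) := (card_le_card hsub).trans card_image_le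
    _ = (#s).multichoose n := by
      rw [card_univ, Sym.card_sym_eq_multichoose, Fintype.card_coe]

lemma card_pow_two_mul_le_card_pow_mul_sum_sq (s : Finset M) (k : ℕ) :
    #s ^ (2 * k) ≤
      #(s ^ k) * ∑ a ∈ s ^ k, #{f ∈ Fintype.piFinset fun _ : Fin k => s | ∏ i, f i = a} ^ 2 := by
  have hprod : ∀ f ∈ Fintype.piFinset fun _ : Fin k => s, ∏ i, f i ∈ s ^ k := fun f hf =>
    mem_pow.mpr ⟨fun i => ⟨f i, Fintype.mem_piFinset.mp hf i⟩, List.prod_ofFn⟩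
  calc #s ^ (2 * k) = #(Fintype.piFinset fun _ : Fin k => s) ^ 2 := by
        rw [Fintype.card_piFinset_const, mul_comm, pow_mul]
    _ = (∑ a ∈ s ^ k, #{f ∈ Fintype.piFinset fun _ : Fin k => s | ∏ i, f i = a}) ^ 2 := by
        rw [card_eq_sum_card_fiberwise hprod]
    _ ≤ _ := sq_sum_le_card_mul_sum_sq

lemma pow_subset_Icc_pow [PartialOrder M] [IsOrderedMonoid M] [LocallyFiniteOrder M]
    {s : Finset M} {a b : M} (hs : s ⊆ Icc a b) (n : ℕ) : s ^ n ⊆ Icc (a ^ n) (b ^ n) := by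
  induction n with
  | zero => simp only [pow_zero, Icc_self, singleton_one, Subset.rfl]
  | succ n ih =>
    simp only [pow_succ]
    exact (mul_subset_mul ih hs).trans (Icc_mul_Icc_subset' _ _ _ _)

/-- The set of products of `m` distinct elements of `s`. When `s` consists of primes it has
`(#s).choose m` elements, each with exactly `m` prime factors. -/
def distinctProducts (s : Finset M) (m : ℕ) : Finset M :=
  (s.powersetCard m).image fun t => ∏ a ∈ t, a

lemma mem_distinctProducts {s : Finset M} {m : ℕ} {a : M} :
    a ∈ distinctProducts s m ↔ ∃ t ⊆ s, #t = m ∧ ∏ b ∈ t, b = a := by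
  simp only [distinctProducts, mem_image, mem_powersetCard, and_assoc]

lemma distinctProducts_subset_pow (s : Finset M) (m : ℕ) : distinctProducts s m ⊆ s ^ m := by
  intro a ha
  obtain ⟨t, hts, rfl, rfl⟩ := mem_distinctProducts.mp ha
  simpa using multiset_prod_mem_pow_card t.val hts

end ProductSets

section PrimeProducts

variable {P Q : Finset ℕ} {m : ℕ}

lemma card_distinctProducts_of_prime (hP : ∀ p ∈ P, p.Prime) (m : ℕ) :
    #(distinctProducts P m) = (#P).choose m := by
  have hfactors : ∀ s ∈ P.powersetCard m, (∏ p ∈ s, p).primeFactors = s := fun s hs =>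
    Nat.primeFactors_prod fun p hp => hP p ((mem_powersetCard.mp hs).1 hp)
  rw [distinctProducts, card_image_of_injOn (Set.LeftInvOn.injOn hfactors), card_powersetCard]

lemma card_distinctProducts_mul_of_prime (hP : ∀ p ∈ P, p.Prime) (hQ : ∀ q ∈ Q, q.Prime)
    (hPQ : Disjoint P Q) (m : ℕ) : #(distinctProducts P m * Q) = (#P).choose m * #Q := by
  rw [← card_distinctProducts_of_prime hP, card_mul_iff]
  rintro ⟨a, q⟩ ⟨-, hq⟩ ⟨a', q'⟩ ⟨ha', hq'⟩ (h : a * q = a' * q')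
  obtain ⟨s', hs'P, -, rfl⟩ := mem_distinctProducts.mp ha'
  have hq_not_dvd : ¬ q ∣ ∏ p ∈ s', p := fun hdvd => by
    obtain ⟨p, hp, hqp⟩ := (hQ q hq).prime.exists_mem_finset_dvd hdvd
    have hqp : q = p := (Nat.prime_dvd_prime_iff_eq (hQ q hq) (hP p (hs'P hp))).mp hqp
    exact disjoint_left.mp hPQ (hs'P hp) (hqp ▸ hq)
  obtain rfl : q = q' := (Nat.prime_dvd_prime_iff_eq (hQ q hq) (hQ q' hq')).mp <|
    ((hQ q hq).dvd_mul.mp (h ▸ dvd_mul_left q a)).resolve_left hq_not_dvd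
  rw [Nat.eq_of_mul_eq_mul_right (hQ q hq).pos h]

lemma cardFactors_prod_of_prime {s : Finset ℕ} (hs : ∀ p ∈ s, p.Prime) :
    Ω (∏ p ∈ s, p) = #s := by
  induction s using Finset.cons_induction with
  | empty => simp
  | cons p s hps ih =>
    have hs' : ∀ q ∈ s, q.Prime := fun q hq => hs q (mem_cons_of_mem hq)
    have hp : p.Prime := hs p (mem_cons_self p s)
    rw [prod_cons, ArithmeticFunction.cardFactors_mul hp.ne_zero
      (prod_ne_zero_iff.mpr fun q hq => (hs' q hq).ne_zero), ih hs',
      ArithmeticFunction.cardFactors_apply_prime hp, card_cons, add_comm]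

lemma distinctProducts_mul_subset_Gamma {y X N : ℕ} {α : ℝ} (hP : ∀ p ∈ P, p.Prime ∧ p ≤ y)
    (hQ : ∀ q ∈ Q, q.Prime ∧ q ≤ X) (hN : y ^ m * X ≤ N) (hm : (m : ℝ) + 1 ≤ log N ^ α) :
    distinctProducts P m * Q ⊆ Gamma α N := by
  intro n hn
  obtain ⟨a, ha, q, hq, rfl⟩ := mem_mul.mp hn
  obtain ⟨s, hsP, rfl, rfl⟩ := mem_distinctProducts.mp ha
  have hs : ∀ p ∈ s, p.Prime := fun p hp => (hP p (hsP hp)).1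
  have hs_pos : 0 < ∏ p ∈ s, p := prod_pos fun p hp => (hs p hp).pos
  have hq_prime : q.Prime := (hQ q hq).1
  have hΩ : bigOmega ((∏ p ∈ s, p) * q) = #s + 1 := by
    change Ω ((∏ p ∈ s, p) * q) = #s + 1
    rw [ArithmeticFunction.cardFactors_mul hs_pos.ne' hq_prime.ne_zero,
      cardFactors_prod_of_prime hs, ArithmeticFunction.cardFactors_apply_prime hq_prime]
  have hs_le : ∏ p ∈ s, p ≤ y ^ #s := prod_le_pow_card s _ y fun p hp => (hP p (hsP hp)).2
  refine mem_filter.mpr ⟨mem_Icc.mpr ⟨Nat.mul_pos hs_pos hq_prime.pos, ?_⟩, ?_⟩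
  · exact (Nat.mul_le_mul hs_le (hQ q hq).2).trans hN
  · rw [hΩ]
    exact_mod_cast hm

lemma card_mul_pow_mul_pow_le {A : Finset ℕ} {z N : ℕ} (hA : A ⊆ P ^ m)
    (hz : ∀ p ∈ P, z ≤ p) (hN : A * Q ⊆ Icc 1 N) (k : ℕ) :
    #((A * Q) ^ k) * z ^ (k * m) ≤ (#P).multichoose (k * m) * N ^ k := by
  obtain hz₀ | hz₀ := (z ^ (k * m)).eq_zero_or_pos
  · simp [hz₀]
  have hz_le : ∀ a ∈ P ^ (k * m), z ^ (k * m) ≤ a := fun a ha =>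
    (mem_Icc.mp (pow_subset_Icc_pow
      (fun p hp => mem_Icc.mpr ⟨hz p hp, le_sup (f := id) hp⟩) _ ha)).1
  have hsub : (A * Q) ^ k ⊆ P ^ (k * m) * Icc 1 (N ^ k / z ^ (k * m)) := by
    intro n hn
    obtain ⟨hn_one, hn_le⟩ := mem_Icc.mp (pow_subset_Icc_pow hN k hn)
    rw [mul_pow] at hn
    obtain ⟨a, ha, b, -, rfl⟩ := mem_mul.mp hn
    have haP : a ∈ P ^ (k * m) := by
      rw [mul_comm, pow_mul]
      exact pow_subset_pow_left hA ha
    refine mul_mem_mul haP (mem_Icc.mpr ⟨?_, (Nat.le_div_iff_mul_le hz₀).mpr ?_⟩)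
    · rw [one_pow] at hn_one
      exact Nat.pos_of_mul_pos_left hn_one
    · calc b * z ^ (k * m) ≤ b * a := Nat.mul_le_mul_left b (hz_le a haP)
        _ ≤ N ^ k := by rwa [mul_comm]
  calc #((A * Q) ^ k) * z ^ (k * m)
      ≤ (#P).multichoose (k * m) * (N ^ k / z ^ (k * m)) * z ^ (k * m) := by
        gcongr
        refine (card_le_card hsub).trans (card_mul_le.trans ?_)
        rw [Nat.card_Icc, Nat.add_sub_cancel]
        gcongr
        exact card_pow_le_multichoose P (k * m)
    _ ≤ (#P).multichoose (k * m) * N ^ k := by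
        rw [mul_assoc]
        gcongr
        exact Nat.div_mul_le_self _ _

end PrimeProducts

lemma Gamma_subset_Icc (α : ℝ) (N : ℕ) : Gamma α N ⊆ Icc 1 N := filter_subset _ _

lemma card_pow_two_mul_le_of_subset_Gamma {S : Finset ℕ} {N : ℕ} {α : ℝ} (hS : S ⊆ Gamma α N)
    (k : ℕ) :
    #S ^ (2 * k) ≤ #(S ^ k) * ∑ A ∈ Icc 1 (N ^ k), taukRalpha k N α A ^ 2 := by
  have hS_pow : S ^ k ⊆ Icc 1 (N ^ k) := by
    simpa using pow_subset_Icc_pow (hS.trans (Gamma_subset_Icc α N)) k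
  refine (card_pow_two_mul_le_card_pow_mul_sum_sq S k).trans (Nat.mul_le_mul_left _ ?_)
  refine (sum_le_sum fun A _ => ?_).trans (sum_le_sum_of_subset hS_pow)
  exact Nat.pow_le_pow_left (card_le_card <| filter_subset_filter _ <|
    Fintype.piFinset_subset _ _ fun _ => hS) 2

section Binomials

lemma div_pow_le_choose {m n : ℕ} (h : m ≤ n) : ((n : ℝ) / m) ^ m ≤ n.choose m := by
  induction m generalizing n with
  | zero => simp
  | succ m ih =>
    obtain ⟨n, rfl⟩ := Nat.exists_eq_add_of_le' (Nat.one_le_of_lt h)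
    have hmn : m ≤ n := Nat.le_of_succ_le_succ h
    have hratio : (((n + 1 : ℕ) : ℝ) / (m + 1 : ℕ)) ^ m ≤ ((n : ℝ) / m) ^ m := by
      obtain rfl | hm := m.eq_zero_or_pos
      · simp
      have hmn' : (m : ℝ) ≤ n := by exact_mod_cast hmn
      push_cast
      gcongr ?_ ^ m
      rw [div_le_div_iff₀ (by positivity) (by positivity)]
      linarith
    have hsucc : ((n + 1).choose (m + 1) : ℝ) =
        ((n + 1 : ℕ) : ℝ) / (m + 1 : ℕ) * n.choose m := by
      rw [div_mul_eq_mul_div, eq_div_iff (by positivity)]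
      exact_mod_cast (Nat.add_one_mul_choose_eq n m).symm
    calc (((n + 1 : ℕ) : ℝ) / (m + 1 : ℕ)) ^ (m + 1)
        = ((n + 1 : ℕ) : ℝ) / (m + 1 : ℕ) * (((n + 1 : ℕ) : ℝ) / (m + 1 : ℕ)) ^ m :=
          pow_succ' _ _
    _ ≤ ((n + 1 : ℕ) : ℝ) / (m + 1 : ℕ) * n.choose m := by
        gcongr
        exact hratio.trans (ih hmn)
    _ = (n + 1).choose (m + 1) := hsucc.symm

lemma choose_le_exp_one_mul_div_pow (n m : ℕ) :
    (n.choose m : ℝ) ≤ (exp 1 * n / m) ^ m := by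
  have hfact : (m : ℝ) ^ m / m.factorial ≤ exp 1 ^ m := by
    rw [exp_one_pow]
    exact pow_div_factorial_le_exp m m.cast_nonneg m
  calc (n.choose m : ℝ) ≤ (n : ℝ) ^ m / m.factorial := Nat.choose_le_pow_div m n
    _ = (n / m : ℝ) ^ m * ((m : ℝ) ^ m / m.factorial) := by
      obtain rfl | hm := m.eq_zero_or_pos
      · simp
      · rw [div_pow]
        field_simp
    _ ≤ (n / m : ℝ) ^ m * exp 1 ^ m := by gcongr
    _ = (exp 1 * n / m) ^ m := by rw [← mul_pow]; ring

lemma exp_one_sq_le : exp 1 ^ 2 ≤ 7.39 := by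
  nlinarith [exp_one_lt_d9, exp_pos 1]

lemma multichoose_mul_pow_le_choose_pow {p m k : ℕ} (hp : 125 * (k * m) ≤ p) :
    (p.multichoose (k * m) : ℝ) * (16 * exp 1 * k ^ 2) ^ (k * m) ≤ (p.choose m : ℝ) ^ (2 * k) := by
  obtain rfl | hm := m.eq_zero_or_pos
  · simp
  obtain rfl | hk := k.eq_zero_or_pos
  · simp
  have hmp : m ≤ p := by nlinarith
  have hpR : 125 * ((k : ℝ) * m) ≤ p := by exact_mod_cast hp
  have hmulti : (p.multichoose (k * m) : ℝ) ≤ (exp 1 * (126 / 125 * p) / (k * m)) ^ (k * m) := by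
    have htop : ((p + k * m - 1 : ℕ) : ℝ) ≤ 126 / 125 * p := by
      have : ((p + k * m - 1 : ℕ) : ℝ) ≤ (p + k * m : ℕ) := by exact_mod_cast Nat.sub_le _ _
      push_cast at this
      linarith
    rw [Nat.multichoose_eq]
    refine (choose_le_exp_one_mul_div_pow _ _).trans ?_
    push_cast
    gcongr
  have hbase : exp 1 * (126 / 125 * p) / (k * m) * (16 * exp 1 * k ^ 2) ≤ ((p : ℝ) / m) ^ 2 := by
    calc exp 1 * (126 / 125 * p) / (k * m) * (16 * exp 1 * k ^ 2)
        = exp 1 ^ 2 * (126 / 125 * 16) * ((k * m : ℝ) * (p / m ^ 2)) := by field_simp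
      _ ≤ 7.39 * (126 / 125 * 16) * ((k * m : ℝ) * (p / m ^ 2)) := by gcongr; exact exp_one_sq_le
      _ ≤ 125 * (k * m : ℝ) * (p / m ^ 2) := by
        rw [← mul_assoc]
        gcongr
        norm_num
      _ ≤ (p : ℝ) * (p / m ^ 2) := by gcongr
      _ = ((p : ℝ) / m) ^ 2 := by ring
  calc (p.multichoose (k * m) : ℝ) * (16 * exp 1 * k ^ 2) ^ (k * m)
      ≤ (exp 1 * (126 / 125 * p) / (k * m)) ^ (k * m) * (16 * exp 1 * k ^ 2) ^ (k * m) := by gcongr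
    _ = (exp 1 * (126 / 125 * p) / (k * m) * (16 * exp 1 * k ^ 2)) ^ (k * m) := (mul_pow _ _ _).symm
    _ ≤ (((p : ℝ) / m) ^ 2) ^ (k * m) := by gcongr
    _ = (((p : ℝ) / m) ^ m) ^ (2 * k) := by ring
    _ ≤ (p.choose m : ℝ) ^ (2 * k) := by gcongr; exact div_pow_le_choose hmp

end Binomials

section Primes

/-- The set of primes `p` with `a < p ≤ b`; the range is half-open so that consecutive ranges are
disjoint. -/
def primesIoc (a b : ℕ) : Finset ℕ := {p ∈ Ioc a b | p.Prime}

lemma mem_primesIoc {a b p : ℕ} : p ∈ primesIoc a b ↔ (a < p ∧ p ≤ b) ∧ p.Prime := by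
  rw [primesIoc, mem_filter, mem_Ioc]

lemma disjoint_primesIoc (a b c : ℕ) : Disjoint (primesIoc a b) (primesIoc b c) :=
  disjoint_left.mpr fun _ hp hp' =>
    (mem_primesIoc.mp hp).1.2.not_gt (mem_primesIoc.mp hp').1.1

lemma theta_le_theta_add_card_primesIoc_mul_log (a b : ℕ) :
    θ b ≤ θ a + #(primesIoc a b) * log b := by
  have hsub : Nat.primesLE b ⊆ Nat.primesLE a ∪ primesIoc a b := fun p hp => by
    simp only [mem_union, Nat.mem_primesLE, mem_primesIoc] at hp ⊢
    grind
  have hcard : ∑ p ∈ primesIoc a b, log p ≤ #(primesIoc a b) * log b := by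
    rw [← nsmul_eq_mul]
    refine sum_le_card_nsmul _ _ _ fun p hp => ?_
    obtain ⟨⟨-, hpb⟩, hp⟩ := mem_primesIoc.mp hp
    exact log_le_log (mod_cast hp.pos) (mod_cast hpb)
  have hdisj : Disjoint (Nat.primesLE a) (primesIoc a b) := disjoint_left.mpr fun p hp hp' =>
    (Nat.mem_primesLE.mp hp).1.not_gt (mem_primesIoc.mp hp').1.1
  rw [Chebyshev.theta_eq_sum_primesLE_log, Chebyshev.theta_eq_sum_primesLE_log]
  calc ∑ p ∈ Nat.primesLE b, log p
      ≤ ∑ p ∈ Nat.primesLE a ∪ primesIoc a b, log p :=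
        sum_le_sum_of_subset_of_nonneg hsub fun p _ _ => log_natCast_nonneg p
    _ = ∑ p ∈ Nat.primesLE a, log p + ∑ p ∈ primesIoc a b, log p := sum_union hdisj
    _ ≤ ∑ p ∈ Nat.primesLE a, log p + #(primesIoc a b) * log b := by gcongr

lemma isLittleO_log_add_one_add_sqrt_mul_log :
    (fun x : ℝ => log (x + 1) + 2 * √x * log x) =o[atTop] fun x => x := by
  have hlog : (fun x : ℝ => log (x + 1)) =o[atTop] fun x => x := by
    have hshift : Tendsto (fun x : ℝ => x + 1) atTop atTop :=
      tendsto_atTop_add_const_right _ _ tendsto_id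
    refine (isLittleO_log_id_atTop.comp_tendsto hshift).trans_isBigO ?_
    exact (Asymptotics.isBigO_refl _ _).add (Asymptotics.isLittleO_const_id_atTop 1).isBigO
  have hsqrt : (fun x : ℝ => 2 * √x * log x) =o[atTop] fun x => x := by
    have h := (Asymptotics.isBigO_refl (fun x : ℝ => √x) atTop).mul_isLittleO
      (isLittleO_log_rpow_atTop (r := 1 / 2) (by norm_num))
    refine ((h.const_mul_left 2).congr_left fun x => (mul_assoc _ _ _).symm).congr' .rfl ?_
    filter_upwards [eventually_ge_atTop 0] with x hx
    rw [← sqrt_eq_rpow, mul_self_sqrt hx]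
  exact hlog.add hsqrt

lemma eventually_mul_le_theta {c : ℝ} (hc : c < log 2) : ∀ᶠ n : ℕ in atTop, c * n ≤ θ n := by
  have herror := isLittleO_log_add_one_add_sqrt_mul_log.bound (sub_pos.mpr hc)
  filter_upwards [tendsto_natCast_atTop_atTop.eventually herror] with n hn
  have hn' := (le_abs_self _).trans hn
  rw [norm_of_nonneg n.cast_nonneg] at hn'
  linarith [Chebyshev.theta_ge n]

lemma eventually_mul_le_card_primesIoc_four_mul :
    ∀ᶠ n : ℕ in atTop, 1.35 * (n : ℝ) ≤ #(primesIoc n (4 * n)) * log (4 * n : ℕ) := by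
  have htheta := eventually_mul_le_theta (c := 0.69) (by linarith [log_two_gt_d9])
  have hfour : Tendsto (fun n : ℕ => 4 * n) atTop atTop := tendsto_id.const_mul_atTop' (by norm_num)
  filter_upwards [hfour.eventually htheta] with n hn
  have hupper := Chebyshev.theta_le_log4_mul_x n.cast_nonneg
  rw [log_four_eq] at hupper
  have hsplit := theta_le_theta_add_card_primesIoc_mul_log n (4 * n)
  push_cast at hn hsplit ⊢
  nlinarith [log_two_lt_d9, n.cast_nonneg (α := ℝ)]

lemma eventually_le_two_mul_card_primesIoc_mul_log :
    ∀ᶠ n : ℕ in atTop, ∀ a : ℕ, 10 * a ≤ n → (n : ℝ) ≤ 2 * #(primesIoc a n) * log n := by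
  filter_upwards [eventually_mul_le_theta (c := 0.69) (by linarith [log_two_gt_d9])] with n hn a ha
  have ha' : 10 * (a : ℝ) ≤ n := by exact_mod_cast ha
  have hupper := Chebyshev.theta_le_log4_mul_x a.cast_nonneg
  rw [log_four_eq] at hupper
  have hsplit := theta_le_theta_add_card_primesIoc_mul_log a n
  nlinarith [log_two_lt_d9, a.cast_nonneg (α := ℝ)]

lemma eventually_le_log_mul_card_primesIoc_div :
    ∀ᶠ N : ℕ in atTop, ∀ a D : ℕ, 0 < D → 10 * a ≤ D → D ^ 2 ≤ N →
      (N : ℝ) ≤ 4 * log N * D * #(primesIoc a (N / D)) := by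
  obtain ⟨n₀, hn₀⟩ := eventually_atTop.mp eventually_le_two_mul_card_primesIoc_mul_log
  filter_upwards [eventually_ge_atTop (n₀ ^ 2)] with N hN a D hD haD hDN
  have hD_sqrt : D ≤ N.sqrt := Nat.le_sqrt'.mpr hDN
  have hsqrt_le : N.sqrt ≤ N / D :=
    (Nat.le_div_iff_mul_le hD).mpr ((Nat.mul_le_mul_left _ hD_sqrt).trans N.sqrt_le)
  have hDX : D ≤ N / D := hD_sqrt.trans hsqrt_le
  have hcount := hn₀ (N / D) ((Nat.le_sqrt'.mpr hN).trans hsqrt_le) a (haD.trans hDX)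
  have hlog : log (N / D : ℕ) ≤ log N :=
    log_le_log (mod_cast hD.trans_le hDX) (mod_cast Nat.div_le_self N D)
  calc (N : ℝ) ≤ 2 * ((N / D : ℕ) : ℝ) * D := by
        have := Nat.lt_div_mul_add (a := N) hD
        exact_mod_cast (by nlinarith : N ≤ 2 * (N / D) * D)
    _ ≤ 2 * (2 * #(primesIoc a (N / D)) * log N) * D := by
        gcongr
        exact hcount.trans (by gcongr)
    _ = 4 * log N * D * #(primesIoc a (N / D)) := by ring

end Primes

lemma choose_mul_card_pow_mul_pow_le {z y X N m : ℕ} {α : ℝ} (hN : y ^ m * X ≤ N)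
    (hm : (m : ℝ) + 1 ≤ log N ^ α) (k : ℕ) :
    ((#(primesIoc z y)).choose m * #(primesIoc y X)) ^ (2 * k) * z ^ (k * m) ≤
      (#(primesIoc z y)).multichoose (k * m) * N ^ k *
        ∑ A ∈ Icc 1 (N ^ k), taukRalpha k N α A ^ 2 := by
  set P := primesIoc z y
  set Q := primesIoc y X
  set E := ∑ A ∈ Icc 1 (N ^ k), taukRalpha k N α A ^ 2
  have hP : ∀ p ∈ P, (z < p ∧ p ≤ y) ∧ p.Prime := fun _ => mem_primesIoc.mp
  have hQ : ∀ q ∈ Q, (y < q ∧ q ≤ X) ∧ q.Prime := fun _ => mem_primesIoc.mp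
  have hGamma : distinctProducts P m * Q ⊆ Gamma α N := distinctProducts_mul_subset_Gamma
    (fun p hp => ⟨(hP p hp).2, (hP p hp).1.2⟩) (fun q hq => ⟨(hQ q hq).2, (hQ q hq).1.2⟩) hN hm
  have himage := card_mul_pow_mul_pow_le (distinctProducts_subset_pow P m)
    (fun p hp => (hP p hp).1.1.le) (hGamma.trans (Gamma_subset_Icc α N)) k
  rw [← card_distinctProducts_mul_of_prime (fun p hp => (hP p hp).2) (fun q hq => (hQ q hq).2)
    (disjoint_primesIoc z y X)]
  calc #(distinctProducts P m * Q) ^ (2 * k) * z ^ (k * m)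
      ≤ #((distinctProducts P m * Q) ^ k) * E * z ^ (k * m) := by
        gcongr
        exact card_pow_two_mul_le_of_subset_Gamma hGamma k
    _ = #((distinctProducts P m * Q) ^ k) * z ^ (k * m) * E := by ring
    _ ≤ (#P).multichoose (k * m) * N ^ k * E := by gcongr

lemma pow_two_mul_le_of_le_mul_pow_mul {N B y q : ℝ} {m : ℕ} (hN : 0 ≤ N) (h : N ≤ B * y ^ m * q)
    (k : ℕ) : N ^ (2 * k) ≤ B ^ (2 * k) * (y ^ 2) ^ (k * m) * q ^ (2 * k) :=
  calc N ^ (2 * k) ≤ (B * y ^ m * q) ^ (2 * k) := by gcongr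
    _ = B ^ (2 * k) * (y ^ 2) ^ (k * m) * q ^ (2 * k) := by ring

lemma exp_mul_pow_le_pow_mul_sum_taukRalpha_sq {k m N : ℕ} {α B : ℝ} (hk : 0 < k) (hN : 0 < N)
    (hP : 125 * (k * m) ≤ #(primesIoc (k ^ 2) (4 * k ^ 2)))
    (hQ : (N : ℝ) ≤ B * ((4 * k ^ 2) ^ m : ℕ) *
      #(primesIoc (4 * k ^ 2) (N / (4 * k ^ 2) ^ m)))
    (hmα : (m : ℝ) + 1 ≤ log N ^ α) :
    exp (k * m) * (N : ℝ) ^ k ≤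
      B ^ (2 * k) * ∑ A ∈ Icc 1 (N ^ k), (taukRalpha k N α A : ℝ) ^ 2 := by
  have henergy := choose_mul_card_pow_mul_pow_le (z := k ^ 2) (k := k)
    (Nat.mul_div_le N ((4 * k ^ 2) ^ m)) hmα
  set p := #(primesIoc (k ^ 2) (4 * k ^ 2))
  set q := #(primesIoc (4 * k ^ 2) (N / (4 * k ^ 2) ^ m))
  set E := ∑ A ∈ Icc 1 (N ^ k), (taukRalpha k N α A : ℝ) ^ 2 with hE
  have henergy' : ((p.choose m : ℝ) * q) ^ (2 * k) * ((k : ℝ) ^ 2) ^ (k * m) ≤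
      p.multichoose (k * m) * (N : ℝ) ^ k * E := by
    rw [hE]
    exact_mod_cast henergy
  have hchoose := multichoose_mul_pow_le_choose_pow hP
  have hQ_pow : (N : ℝ) ^ (2 * k) ≤
      B ^ (2 * k) * (16 * (k : ℝ) ^ 2 * k ^ 2) ^ (k * m) * q ^ (2 * k) := by
    rw [show 16 * (k : ℝ) ^ 2 * k ^ 2 = (4 * (k : ℝ) ^ 2) ^ 2 by ring]
    exact pow_two_mul_le_of_le_mul_pow_mul N.cast_nonneg (mod_cast hQ) k
  have hmulti : 0 < p.multichoose (k * m) := by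
    rw [Nat.multichoose_eq]
    exact Nat.choose_pos (by omega)
  have hfactor : 0 < p.multichoose (k * m) * (16 * (k : ℝ) ^ 2) ^ (k * m) * (N : ℝ) ^ k := by
    positivity
  have hB : 0 ≤ B ^ (2 * k) := by
    rw [pow_mul]
    positivity
  refine le_of_mul_le_mul_left ?_ hfactor
  calc p.multichoose (k * m) * (16 * (k : ℝ) ^ 2) ^ (k * m) * (N : ℝ) ^ k *
        (exp (k * m) * (N : ℝ) ^ k)
      = p.multichoose (k * m) * (16 * exp 1 * (k : ℝ) ^ 2) ^ (k * m) * (N : ℝ) ^ (2 * k) := by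
        rw [show exp (k * m) = exp 1 ^ (k * m) by rw [exp_one_pow, Nat.cast_mul]]
        ring
    _ ≤ (p.choose m : ℝ) ^ (2 * k) *
        (B ^ (2 * k) * (16 * (k : ℝ) ^ 2 * k ^ 2) ^ (k * m) * q ^ (2 * k)) := by gcongr
    _ = B ^ (2 * k) * (16 * (k : ℝ) ^ 2) ^ (k * m) *
        (((p.choose m : ℝ) * q) ^ (2 * k) * ((k : ℝ) ^ 2) ^ (k * m)) := by ring
    _ ≤ B ^ (2 * k) * (16 * (k : ℝ) ^ 2) ^ (k * m) *
        (p.multichoose (k * m) * (N : ℝ) ^ k * E) := by gcongr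
    _ = p.multichoose (k * m) * (16 * (k : ℝ) ^ 2) ^ (k * m) * (N : ℝ) ^ k * (B ^ (2 * k) * E) := by
        ring

section Parameters

variable {k m : ℕ} {l : ℝ}

/- Any constant below `200` leaves room for the loss `(4 log N) ^ (2 k)`, whose logarithm is at most
`4 k l` with `l = log log N`; it has to exceed `125 * 2.1 / 1.35 = 194.4…` for there to be
`125 k m` primes between `k ^ 2` and `4 k ^ 2`. -/
lemma exists_nat_two_le_and_mul_le_and_sq_div_add_le (hl : 40000 ≤ l) (hk : l ^ 3 ≤ k) :
    ∃ m : ℕ, 2 ≤ m ∧ 195 * l * m ≤ k ∧ (k : ℝ) ^ 2 / (200 * l) + 4 * k * l ≤ k * m := by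
  have hl₀ : 0 < l := by linarith
  have hkl : l ^ 2 ≤ k / l := (le_div_iff₀ hl₀).mpr (by linarith)
  have hl_sq : 40000 * l ≤ l ^ 2 := by nlinarith
  have hfloor : (k : ℝ) / l / 195 < ⌊(k : ℝ) / l / 195⌋₊ + 1 := Nat.lt_floor_add_one _
  have hfloor_le : (⌊(k : ℝ) / l / 195⌋₊ : ℝ) ≤ k / l / 195 := Nat.floor_le (by positivity)
  set m := ⌊(k : ℝ) / l / 195⌋₊
  refine ⟨m, Nat.le_floor (by push_cast; linarith), ?_, ?_⟩
  · rw [div_div, le_div_iff₀ (by positivity)] at hfloor_le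
    linarith
  · calc (k : ℝ) ^ 2 / (200 * l) + 4 * k * l = k * (k / l / 200 + 4 * l) := by field_simp
      _ ≤ k * m := by gcongr; linarith

lemma log_four_mul_sq_le (hl : 14 ≤ l) (hk : 0 < k) (hkl : log k ≤ l) :
    log (4 * k ^ 2 : ℕ) ≤ 2.1 * l := by
  push_cast
  rw [log_mul (by positivity) (by positivity), log_four_eq, log_pow, Nat.cast_ofNat]
  linarith [log_two_lt_d9]

lemma mul_le_card_primesIoc_of_log_le (hl : 0 < l) (hm : 195 * l * m ≤ k)
    (hlog : log (4 * k ^ 2 : ℕ) ≤ 2.1 * l)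
    (hcard : 1.35 * ((k ^ 2 : ℕ) : ℝ) ≤
      #(primesIoc (k ^ 2) (4 * k ^ 2)) * log (4 * k ^ 2 : ℕ)) :
    125 * (k * m) ≤ #(primesIoc (k ^ 2) (4 * k ^ 2)) := by
  set p := #(primesIoc (k ^ 2) (4 * k ^ 2))
  suffices h : (125 * (k * m) : ℝ) * (2.1 * l) ≤ p * (2.1 * l) by
    exact_mod_cast le_of_mul_le_mul_right h (by positivity)
  calc (125 * (k * m) : ℝ) * (2.1 * l) = 262.5 / 195 * k * (195 * l * m) := by ring
    _ ≤ 262.5 / 195 * k * k := by gcongr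
    _ ≤ 1.35 * ((k ^ 2 : ℕ) : ℝ) := by
      push_cast
      rw [mul_assoc, ← sq]
      gcongr
      norm_num
    _ ≤ p * (2.1 * l) := hcard.trans (by gcongr)

lemma pow_sq_le_of_log_le {N x : ℕ} (hl : 0 ≤ l) (hN : 0 < N) (hm : 195 * l * m ≤ log N)
    (hx_pos : 0 < x) (hx : log x ≤ 2.1 * l) : (x ^ m) ^ 2 ≤ N := by
  rw [← pow_mul]
  have hlog : ((m * 2 : ℕ) : ℝ) * log x ≤ log N :=
    calc ((m * 2 : ℕ) : ℝ) * log x ≤ (m * 2 : ℕ) * (2.1 * l) := by gcongr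
      _ ≤ 195 * l * m := by
        push_cast
        nlinarith [mul_nonneg hl m.cast_nonneg]
      _ ≤ log N := hm
  exact_mod_cast (pow_le_iff_le_log (mod_cast hx_pos) (mod_cast hN)).mpr hlog

end Parameters

lemma mul_exp_le_of_exp_mul_le {k : ℕ} {L M E u v : ℝ} (hL : 4 ≤ L) (hM : 0 ≤ M) (hE : 0 ≤ E)
    (h : exp v * M ≤ (4 * L) ^ (2 * k) * E) (huv : u + 4 * k * log L ≤ v) : M * exp u ≤ E := by
  have hL_pow : (4 * L) ^ (2 * k) ≤ exp (4 * k * log L) :=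
    calc (4 * L) ^ (2 * k) ≤ (L * L) ^ (2 * k) := by gcongr
      _ = L ^ (4 * k) := by ring
      _ = exp (4 * k * log L) := by
        rw [← exp_log (by positivity : 0 < L ^ (4 * k)), log_pow]
        push_cast
        rfl
  refine le_of_mul_le_mul_right ?_ (exp_pos (4 * k * log L))
  calc M * exp u * exp (4 * k * log L) = exp (u + 4 * k * log L) * M := by rw [exp_add]; ring
    _ ≤ exp v * M := by gcongr
    _ ≤ (4 * L) ^ (2 * k) * E := h
    _ ≤ exp (4 * k * log L) * E := by gcongr
    _ = E * exp (4 * k * log L) := mul_comm _ _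

lemma pow_mul_exp_le_sum_taukRalpha_sq {N k : ℕ} {α : ℝ} (hα : α ≤ 1)
    (hl : 40000 ≤ log (log N)) (hk_ge : log (log N) ^ (3 : ℕ) ≤ k) (hk_le : (k : ℝ) ≤ log N ^ α)
    (hP : 1.35 * ((k ^ 2 : ℕ) : ℝ) ≤ #(primesIoc (k ^ 2) (4 * k ^ 2)) * log (4 * k ^ 2 : ℕ))
    (hQ : ∀ a D : ℕ, 0 < D → 10 * a ≤ D → D ^ 2 ≤ N →
      (N : ℝ) ≤ 4 * log N * D * #(primesIoc a (N / D))) :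
    (N : ℝ) ^ k * exp ((k : ℝ) ^ 2 / (200 * log (log N))) ≤
      ∑ A ∈ Icc 1 (N ^ k), (taukRalpha k N α A : ℝ) ^ 2 := by
  have hL : 40000 ≤ log (N : ℝ) := hl.trans (log_le_self (log_natCast_nonneg N))
  have hN : 0 < N := Nat.pos_of_ne_zero fun hN => by norm_num [hN] at hL
  have hk_two : (2 : ℝ) ≤ k := by
    linarith [le_self_pow₀ (by linarith : 1 ≤ log (log N)) three_ne_zero]
  have hk : 0 < k := by exact_mod_cast two_pos.trans_le hk_two
  have hkL : (k : ℝ) ≤ log N := hk_le.trans (rpow_le_self_of_one_le (by linarith) hα)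
  obtain ⟨m, hm, hmk, hexp⟩ := exists_nat_two_le_and_mul_le_and_sq_div_add_le hl hk_ge
  have hlog_y : log (4 * k ^ 2 : ℕ) ≤ 2.1 * log (log N) :=
    log_four_mul_sq_le (by linarith) hk (log_le_log (mod_cast hk) hkL)
  have hy_pow : ((4 * k ^ 2) ^ m) ^ 2 ≤ N :=
    pow_sq_le_of_log_le (by linarith) hN (hmk.trans hkL) (by positivity) hlog_y
  have hy_le : 10 * (4 * k ^ 2) ≤ (4 * k ^ 2) ^ m := by
    have : 2 ≤ k := by exact_mod_cast hk_two
    calc 10 * (4 * k ^ 2) ≤ (4 * k ^ 2) * (4 * k ^ 2) := by gcongr; nlinarith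
      _ = (4 * k ^ 2) ^ 2 := (sq _).symm
      _ ≤ (4 * k ^ 2) ^ m := Nat.pow_le_pow_right (by positivity) hm
  have hmα : (m : ℝ) + 1 ≤ log N ^ α := by
    have : (2 : ℝ) ≤ m := by exact_mod_cast hm
    nlinarith
  exact mul_exp_le_of_exp_mul_le (by linarith) (by positivity) (by positivity)
    (exp_mul_pow_le_pow_mul_sum_taukRalpha_sq hk hN
      (mul_le_card_primesIoc_of_log_le (by linarith) hmk hlog_y hP)
      (hQ _ _ (by positivity) hy_le hy_pow) hmα) hexp

theorem lower_bound_sum_taukRalpha_sq_general :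
    ∃ N₀ : ℕ, ∀ α : ℝ, α ≤ 1 → ∀ N : ℕ, N₀ ≤ N → ∀ k : ℕ,
      log (log N) ^ (3 : ℕ) ≤ (k : ℝ) → (k : ℝ) ≤ log N ^ α →
      (N : ℝ) ^ k * exp ((k : ℝ) ^ 2 / (200 * log (log N))) ≤
        ∑ A ∈ Icc 1 (N ^ k), (taukRalpha k N α A : ℝ) ^ 2 := by
  obtain ⟨n₀, hn₀⟩ := eventually_atTop.mp eventually_mul_le_card_primesIoc_four_mul
  have hloglog : Tendsto (fun N : ℕ => log (log (N : ℝ))) atTop atTop :=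
    tendsto_log_atTop.comp (tendsto_log_atTop.comp tendsto_natCast_atTop_atTop)
  obtain ⟨N₀, hN₀⟩ := eventually_atTop.mp <| eventually_le_log_mul_card_primesIoc_div.and <|
    hloglog.eventually_ge_atTop (max 40000 n₀)
  refine ⟨N₀, fun α hα N hN k hk_ge hk_le => ?_⟩
  obtain ⟨hQ, hl_max⟩ := hN₀ N hN
  obtain ⟨hl, hln₀⟩ := max_le_iff.mp hl_max
  have hlk : log (log N) ≤ k := (le_self_pow₀ (by linarith) three_ne_zero).trans hk_ge
  have hkn₀ : n₀ ≤ k := by exact_mod_cast hln₀.trans hlk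
  exact pow_mul_exp_le_sum_taukRalpha_sq hα hl hk_ge hk_le
    (hn₀ _ (hkn₀.trans (Nat.le_self_pow two_ne_zero k))) hQ

theorem lower_bound_sum_taukRalpha_sq (α : ℝ) (hα0 : 0 < α) (hα1 : α < 1) :
    ∃ N₀ : ℕ, ∃ c : ℝ, 0 < c ∧
      ∀ N : ℕ, N₀ ≤ N → ∀ k : ℕ,
        Real.log (Real.log N) ^ (3 : ℕ) ≤ (k : ℝ) → (k : ℝ) ≤ Real.log N ^ α →
        c * (N : ℝ) ^ k * Real.exp ((k : ℝ) ^ 2 / (200 * Real.log (Real.log N))) ≤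
          ∑ A ∈ Finset.Icc 1 (N ^ k), (taukRalpha k N α A : ℝ) ^ 2 := by
  obtain ⟨N₀, h⟩ := lower_bound_sum_taukRalpha_sq_general
  exact ⟨N₀, 1, one_pos, by simpa only [one_mul] using h α hα1.le⟩
end
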